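/- Let Ω = (0,1)×(−1,1). Then A ∩ SBV_∞(Ω;ℝ²) = {u ∈ SBV_∞(Ω;ℝ²) : u(x) = R(x₂)x + ψ(x₂) for a.e. x ∈ Ω, with R ∈ PC(−1,1;SO(2)) and ψ ∈ SBV_∞(−1,1;ℝ²) such that ψ'·Re₂ = 0 a.e. in (−1,1)}. In particular, for such u the jump sets J_R and J_ψ are finite sets of points in (−1,1), and J_u is a finite union of segments parallel to e₁. -/

import Mathlib

open MeasureTheory Set Filter Topology
open scoped ENNReal

noncomputable section

/-- We identify `ℝ²` with maps `Fin 2 → ℝ`; `x 0` is the `x₁` coordinate and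
`x 1` the `x₂` coordinate. -/
abbrev V2 := Fin 2 → ℝ

/-- `2 × 2` real matrices. -/
abbrev Mat2 := Matrix (Fin 2) (Fin 2) ℝ

/-- Proper rotations: `SO(2) = {R : R Rᵀ = 1, det R = 1}`. -/
def SO2 : Set Mat2 := {R | R * R.transpose = 1 ∧ R.det = 1}

def e1 : V2 := ![1, 0]
def e2 : V2 := ![0, 1]

/-- Euclidean norm on `ℝ²`. -/
def vnorm (v : V2) : ℝ := Real.sqrt (v 0 ^ 2 + v 1 ^ 2)

/-- Frobenius norm on `2 × 2` matrices. -/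
def mnorm (M : Mat2) : ℝ := Real.sqrt (∑ i, ∑ j, M i j ^ 2)

/-- Euclidean inner product on `ℝ²`. -/
def dot (v w : V2) : ℝ := ∑ i, v i * w i

/-- Tensor (outer) product `a ⊗ b = a bᵀ` of two vectors. -/
def outer (a b : V2) : Mat2 := Matrix.of fun i j => a i * b j

/-- Identification of `ℝ²` with the Euclidean space `EuclideanSpace ℝ (Fin 2)`. -/
def vToE (v : V2) : EuclideanSpace ℝ (Fin 2) := (EuclideanSpace.equiv (Fin 2) ℝ).symm v

/-- Identification of `2×2` matrices with `EuclideanSpace ℝ (Fin 2 × Fin 2)`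
(so that the induced norm is the Frobenius norm). -/
def mToE (M : Mat2) : EuclideanSpace ℝ (Fin 2 × Fin 2) :=
  (EuclideanSpace.equiv (Fin 2 × Fin 2) ℝ).symm fun p => M p.1 p.2

/-- A vector-valued function of one real variable has bounded variation on `s`
(with respect to the Euclidean norm). -/
def BVv (ψ : ℝ → V2) (s : Set ℝ) : Prop := BoundedVariationOn (fun t => vToE (ψ t)) s

/-- A matrix-valued function of one real variable has bounded variation on `s`
(with respect to the Frobenius norm). -/
def BVm (R : ℝ → Mat2) (s : Set ℝ) : Prop := BoundedVariationOn (fun t => mToE (R t)) s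

/-- Componentwise (a.e. pointwise) derivative of a vector-valued function of one variable.
For a one-dimensional `BV` function, the classical derivative exists a.e. and coincides with
the density of the absolutely continuous part of its distributional derivative
(the approximate derivative). -/
def vecDeriv (ψ : ℝ → V2) (t : ℝ) : V2 := fun i => deriv (fun s => ψ s i) t

/-- Componentwise derivative of a matrix-valued function of one variable. -/
def mDeriv (R : ℝ → Mat2) (t : ℝ) : Mat2 := Matrix.of fun i j => deriv (fun s => R s i j) t

/-- The rigid layers `ε Y_rig = {x : Int.fract (x₂/ε) ∈ [λ, 1)}` (1-periodic extension of
`[0,1) × [λ,1)`, scaled by `ε`). -/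
def rigid2 (lam ε : ℝ) : Set V2 := {x | lam ≤ Int.fract (x 1 / ε)}

/-- The one-dimensional rigid layers `ε I_rig`, where `I_rig` is the 1-periodic extension
of `[λ, 1)`. -/
def rigid1 (lam ε : ℝ) : Set ℝ := {t | lam ≤ Int.fract (t / ε)}

/-- `a_Ω = inf_{x ∈ Ω} x₂`. -/
def aOm (Ω : Set V2) : ℝ := sInf ((fun x : V2 => x 1) '' Ω)

/-- `b_Ω = sup_{x ∈ Ω} x₂`. -/
def bOm (Ω : Set V2) : ℝ := sSup ((fun x : V2 => x 1) '' Ω)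

/-- `Ω` is `x₁`-connected: every horizontal slice is a (possibly empty) interval. -/
def X1Connected (Ω : Set V2) : Prop := ∀ t : ℝ, OrdConnected {s : ℝ | ![s, t] ∈ Ω}

/-- A (nonempty) bounded Lipschitz domain: near every boundary point, after a rotation,
`Ω` is the region above the graph of a Lipschitz function. -/
def IsLipschitzDomain (Ω : Set V2) : Prop :=
  IsOpen Ω ∧ Ω.Nonempty ∧ Bornology.IsBounded Ω ∧
    ∀ x ∈ frontier Ω, ∃ Q ∈ SO2, ∃ L : NNReal, ∃ f : ℝ → ℝ, ∃ r : ℝ, 0 < r ∧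
      LipschitzWith L f ∧ ∀ y ∈ Metric.ball x r, (y ∈ Ω ↔ f (Q.mulVec y 0) < Q.mulVec y 1)

/-- Partial derivative `∂_j φ` of a scalar test function. -/
def pd (j : Fin 2) (φ : V2 → ℝ) (x : V2) : ℝ := fderiv ℝ φ x (Pi.single j 1)

/-- Componentwise integrability of a matrix-valued map. -/
def IntegrableOnM (g : V2 → Mat2) (Ω : Set V2) : Prop :=
  ∀ i j, IntegrableOn (fun x => g x i j) Ω volume

/-- `u ∈ W^{1,1}(Ω;ℝ²)` with weak gradient `gu`, expressed through integration by parts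
against smooth compactly supported test functions. -/
structure IsSobolev11On (Ω : Set V2) (u : V2 → V2) (gu : V2 → Mat2) : Prop where
  int_u : IntegrableOn u Ω volume
  int_gu : IntegrableOnM gu Ω
  ibp : ∀ φ : V2 → ℝ, ContDiff ℝ (⊤ : ℕ∞) φ → HasCompactSupport φ → tsupport φ ⊆ Ω →
    ∀ i j, ∫ x in Ω, u x i * pd j φ x = - ∫ x in Ω, φ x * gu x i j

/-- `u ∈ BV(Ω;ℝ²)`, with distributional derivative `Du = gu · L² + gs · σ`.
Here `gu` is the approximate differential (density of the absolutely continuous part),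
`σ = |D^s u|` is the total variation measure of the singular part (a finite measure,
concentrated on `Ω` and singular with respect to Lebesgue measure), and `gs` is the
polar density of the singular part, of unit Frobenius norm `σ`-a.e. -/
structure HasBVDerivOn (Ω : Set V2) (u : V2 → V2) (gu : V2 → Mat2)
    (σ : Measure V2) (gs : V2 → Mat2) : Prop where
  int_u : IntegrableOn u Ω volume
  int_gu : IntegrableOnM gu Ω
  fin : σ Set.univ ≠ ⊤
  conc : σ Ωᶜ = 0
  perp : σ ⟂ₘ (volume : Measure V2)
  meas_gs : ∀ i j, AEMeasurable (fun x => gs x i j) σ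
  unit : ∀ᵐ x ∂σ, mnorm (gs x) = 1
  ibp : ∀ φ : V2 → ℝ, ContDiff ℝ (⊤ : ℕ∞) φ → HasCompactSupport φ → tsupport φ ⊆ Ω →
    ∀ i j, ∫ x in Ω, u x i * pd j φ x
        = (- ∫ x in Ω, φ x * gu x i j) - ∫ x, φ x * gs x i j ∂σ

/-- `L¹(Ω;ℝ²)` convergence of a sequence. -/
def L1ConvOn (Ω : Set V2) (un : ℕ → V2 → V2) (u : V2 → V2) : Prop :=
  Tendsto (fun n => ∫ x in Ω, vnorm (un n x - u x)) atTop (𝓝 0)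

/-- Weak* convergence of the measures `gn n · L²∟Ω` to `gu · L²∟Ω + gs · σ`
in `M(Ω; ℝ^{2×2})`, tested against continuous functions compactly supported in `Ω`. -/
def MeasConv (Ω : Set V2) (gn : ℕ → V2 → Mat2) (gu : V2 → Mat2)
    (σ : Measure V2) (gs : V2 → Mat2) : Prop :=
  ∀ φ : V2 → ℝ, Continuous φ → HasCompactSupport φ → tsupport φ ⊆ Ω → ∀ i j,
    Tendsto (fun n => ∫ x in Ω, φ x * gn n x i j) atTop
      (𝓝 ((∫ x in Ω, φ x * gu x i j) + ∫ x, φ x * gs x i j ∂σ))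

/-- Weak* convergence in `BV(Ω;ℝ²)` of a sequence of `W^{1,1}` maps to a `BV` limit:
`L¹` convergence together with weak* convergence of the derivative measures. -/
def WeakStarToBV (Ω : Set V2) (un : ℕ → V2 → V2) (u : V2 → V2) : Prop :=
  ∃ gu σ gs, HasBVDerivOn Ω u gu σ gs ∧ L1ConvOn Ω un u ∧
    ∀ gn : ℕ → V2 → Mat2, (∀ n, IsSobolev11On Ω (un n) (gn n)) → MeasConv Ω gn gu σ gs

/-- `u ∈ A_ε`, witnessed by the data `R ∈ L^∞(Ω;SO(2))` and `γ ∈ L¹(Ω)`: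
`u ∈ W^{1,1}(Ω;ℝ²)` with `∇u = R (I + γ e₁⊗e₂)` a.e. and `γ = 0` a.e. on `εY_rig ∩ Ω`. -/
structure MemAeps (Ω : Set V2) (lam ε : ℝ) (u : V2 → V2)
    (R : V2 → Mat2) (γ : V2 → ℝ) : Prop where
  so2 : ∀ᵐ x ∂(volume.restrict Ω), R x ∈ SO2
  int_γ : IntegrableOn γ Ω volume
  sob : IsSobolev11On Ω u fun x => R x * (1 + γ x • outer e1 e2)
  rig : ∀ᵐ x ∂(volume.restrict (Ω ∩ rigid2 lam ε)), γ x = 0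

/-- The elastoplastic energy `E_ε(u) = ∫_Ω |γ| dx` for `u ∈ A_ε`, `∞` otherwise,
as an `ℝ≥0∞`-valued functional (the decomposition data is essentially unique). -/
def Eeps (Ω : Set V2) (lam ε : ℝ) (u : V2 → V2) : ℝ≥0∞ :=
  sInf {c | ∃ R γ, MemAeps Ω lam ε u R γ ∧ c = ∫⁻ x in Ω, ENNReal.ofReal |γ x|}

/-- `u ∈ A` relative to the vertical interval `(a, b)`:
`u ∈ BV(Ω;ℝ²)` with `u(x) = R(x₂)x + ψ(x₂)` a.e., `R ∈ BV(a,b;SO(2))`,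
`ψ ∈ BV(a,b;ℝ²)` and `det ∇u = 1` a.e. in `Ω`. -/
def memAOn (Ω : Set V2) (a b : ℝ) (u : V2 → V2) : Prop :=
  ∃ gu σ gs, HasBVDerivOn Ω u gu σ gs ∧
    (∃ R : ℝ → Mat2, ∃ ψ : ℝ → V2, (∀ t ∈ Ioo a b, R t ∈ SO2) ∧
      BVm R (Ioo a b) ∧ BVv ψ (Ioo a b) ∧
      ∀ᵐ x ∂(volume.restrict Ω), u x = (R (x 1)).mulVec x + ψ (x 1)) ∧
    ∀ᵐ x ∂(volume.restrict Ω), (gu x).det = 1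

/-- `u ∈ A`. -/
def memA (Ω : Set V2) (u : V2 → V2) : Prop := memAOn Ω (aOm Ω) (bOm Ω) u

/-- `u ∈ A∥` relative to the vertical interval `(a,b)`:
`u(x) = Rx + ϑ(x₂) R e₁ + c` a.e. with a constant rotation `R ∈ SO(2)`,
`ϑ ∈ BV(a,b)` and `c ∈ ℝ²`. -/
def memAparOn (Ω : Set V2) (a b : ℝ) (u : V2 → V2) : Prop :=
  ∃ R ∈ SO2, ∃ ϑ : ℝ → ℝ, ∃ c : V2, BoundedVariationOn ϑ (Ioo a b) ∧
    ∀ᵐ x ∂(volume.restrict Ω), u x = R.mulVec x + ϑ (x 1) • R.mulVec e1 + c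

/-- `u ∈ A∥`. -/
def memApar (Ω : Set V2) (u : V2 → V2) : Prop := memAparOn Ω (aOm Ω) (bOm Ω) u

/-- The limit energy `E(u) = ∫_Ω |ψ'·Re₁| dx + |D^s u|(Ω)` for `u ∈ A`, `∞` otherwise. -/
def Efun (Ω : Set V2) (u : V2 → V2) : ℝ≥0∞ :=
  sInf {c | ∃ gu σ gs, HasBVDerivOn Ω u gu σ gs ∧
    ∃ R : ℝ → Mat2, ∃ ψ : ℝ → V2,
      (∀ t ∈ Ioo (aOm Ω) (bOm Ω), R t ∈ SO2) ∧ BVm R (Ioo (aOm Ω) (bOm Ω)) ∧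
      BVv ψ (Ioo (aOm Ω) (bOm Ω)) ∧
      (∀ᵐ x ∂(volume.restrict Ω), u x = (R (x 1)).mulVec x + ψ (x 1)) ∧
      (∀ᵐ x ∂(volume.restrict Ω), (gu x).det = 1) ∧
      c = (∫⁻ x in Ω, ENNReal.ofReal |dot (vecDeriv ψ (x 1)) ((R (x 1)).mulVec e1)|)
          + σ Set.univ}

/-- The limit energy on `A∥`: `E(u) = ∫_Ω |ϑ'(x₂)| dx + |D^s u|(Ω)` for `u ∈ A∥`,
`∞` otherwise. -/
def EparFun (Ω : Set V2) (u : V2 → V2) : ℝ≥0∞ :=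
  sInf {c | ∃ gu σ gs, HasBVDerivOn Ω u gu σ gs ∧
    ∃ R ∈ SO2, ∃ ϑ : ℝ → ℝ, ∃ c0 : V2, BoundedVariationOn ϑ (Ioo (aOm Ω) (bOm Ω)) ∧
      (∀ᵐ x ∂(volume.restrict Ω), u x = R.mulVec x + ϑ (x 1) • R.mulVec e1 + c0) ∧
      c = (∫⁻ x in Ω, ENNReal.ofReal |deriv ϑ (x 1)|) + σ Set.univ}

/-- The regularized limit energy `E^δ(u) = ∫_Ω |ϑ'| dx + |D^s u|(Ω) + δ|Ω|` on `A∥`,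
`∞` otherwise. -/
def EDelta (Ω : Set V2) (δ : ℝ) (u : V2 → V2) : ℝ≥0∞ :=
  EparFun Ω u + ENNReal.ofReal δ * volume Ω

/-- `‖v‖_{W^{1,p}(Ω;ℝ²)}^p = ∫_Ω |v|^p + ∫_Ω |Dv|^p` for a map `v` with weak Jacobian `G`. -/
def Wp1 (p : ℝ) (Ω : Set V2) (v : V2 → V2) (G : V2 → Mat2) : ℝ≥0∞ :=
  (∫⁻ x in Ω, ENNReal.ofReal (vnorm (v x) ^ p)) + ∫⁻ x in Ω, ENNReal.ofReal (mnorm (G x) ^ p)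

/-- The regularized energy
`E^δ_ε(u) = ∫_Ω |γ| dx + δ ‖∂₁ u‖_{W^{1,p}(Ω;ℝ²)}^p` for `u ∈ A_ε` with
`∂₁u = R e₁ ∈ W^{1,p}(Ω;ℝ²)`, and `∞` otherwise. -/
def EepsDelta (Ω : Set V2) (lam ε δ p : ℝ) (u : V2 → V2) : ℝ≥0∞ :=
  sInf {c | ∃ R γ, MemAeps Ω lam ε u R γ ∧
    ∃ G : V2 → Mat2, IsSobolev11On Ω (fun x => (R x).mulVec e1) G ∧
      c = (∫⁻ x in Ω, ENNReal.ofReal |γ x|) +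
          ENNReal.ofReal δ * Wp1 p Ω (fun x => (R x).mulVec e1) G}

/-- `x` is an approximate jump point of `u`, with one-sided approximate limits `a ≠ b`
relative to a unit normal `ν`. -/
def JumpPt (u : V2 → V2) (x : V2) : Prop :=
  ∃ a b ν : V2, a ≠ b ∧ vnorm ν = 1 ∧
    Tendsto (fun r : ℝ =>
        (∫⁻ z in {z | z ∈ Metric.ball x r ∧ 0 < dot (z - x) ν},
            ENNReal.ofReal (vnorm (u z - a))) / volume (Metric.ball x r))
      (𝓝[>] 0) (𝓝 0) ∧
    Tendsto (fun r : ℝ =>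
        (∫⁻ z in {z | z ∈ Metric.ball x r ∧ dot (z - x) ν < 0},
            ENNReal.ofReal (vnorm (u z - b))) / volume (Metric.ball x r))
      (𝓝[>] 0) (𝓝 0)

/-- The jump set `J_u` of `u` in `Ω`. -/
def jumpSet (Ω : Set V2) (u : V2 → V2) : Set V2 := {x ∈ Ω | JumpPt u x}

/-- `u ∈ SBV_∞(Ω;ℝ²)`: `u ∈ BV` with singular part concentrated on the jump set
(no Cantor part), `∇u ∈ L^∞(Ω;ℝ^{2×2})` and `H¹(J_u) < ∞`. -/
def memSBVinf (Ω : Set V2) (u : V2 → V2) : Prop :=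
  ∃ gu σ gs, HasBVDerivOn Ω u gu σ gs ∧
    σ {x | ¬ JumpPt u x} = 0 ∧
    (∃ M : ℝ, ∀ᵐ x ∂(volume.restrict Ω), mnorm (gu x) ≤ M) ∧
    Measure.hausdorffMeasure (1 : ℝ) (jumpSet Ω u) ≠ ⊤

/-- Piecewise constant functions on `(a,b)` with finitely many jumps
(the class `PC(a,b)`). -/
def PCOn {α : Type*} (a b : ℝ) (f : ℝ → α) : Prop :=
  ∃ S : Finset ℝ, ∀ s₁ ∈ Ioo a b, ∀ s₂ ∈ Ioo a b, s₁ ≤ s₂ →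
    (∀ r ∈ S, r ∉ Icc s₁ s₂) → f s₁ = f s₂

/-- Piecewise Lipschitz functions on `(a,b)` with finitely many jump points:
the class `SBV_∞(a,b;ℝ²)` of one-dimensional special functions of bounded variation
with bounded derivative and finitely many jumps. -/
def PLipOn (a b : ℝ) (f : ℝ → V2) : Prop :=
  ∃ S : Finset ℝ, ∃ L : ℝ, 0 ≤ L ∧ ∀ s₁ ∈ Ioo a b, ∀ s₂ ∈ Ioo a b, s₁ ≤ s₂ →
    (∀ r ∈ S, r ∉ Icc s₁ s₂) → vnorm (f s₂ - f s₁) ≤ L * (s₂ - s₁)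

/-- The rectangle `Ω = (0,1) × (−1,1)`. -/
def Rect : Set V2 := {x | x 0 ∈ Ioo (0:ℝ) 1 ∧ x 1 ∈ Ioo (-1:ℝ) 1}

/-- `f ∈ W^{1,1}(a,b)`: `f` has an integrable weak derivative on `(a,b)`
(absolutely continuous representative). -/
def IsW11On (f : ℝ → ℝ) (a b : ℝ) : Prop :=
  ∃ g : ℝ → ℝ, IntegrableOn g (Ioo a b) volume ∧
    ∀ s ∈ Ioo a b, ∀ t ∈ Ioo a b, f t - f s = ∫ r in s..t, g r

lemma SO2_entries {R : Mat2} (h : R ∈ SO2) :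
    R 0 1 = - R 1 0 ∧ R 1 1 = R 0 0 ∧ R 0 0 ^ 2 + R 1 0 ^ 2 = 1 := by
  obtain ⟨h1, h2⟩ := h
  have h11 := congrFun (congrFun h1 0) 0
  have h22 := congrFun (congrFun h1 1) 1
  simp [Matrix.mul_apply, Fin.sum_univ_two] at h11 h22
  rw [Matrix.det_fin_two] at h2
  have e : (R 0 0 - R 1 1) ^ 2 + (R 0 1 + R 1 0) ^ 2 = 0 := by nlinarith
  have e1 : R 0 0 - R 1 1 = 0 := by nlinarith [sq_nonneg (R 0 0 - R 1 1), sq_nonneg (R 0 1 + R 1 0)]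
  have e2 : R 0 1 + R 1 0 = 0 := by nlinarith [sq_nonneg (R 0 0 - R 1 1), sq_nonneg (R 0 1 + R 1 0)]
  have e3 : R 0 1 = - R 1 0 := by linarith
  refine ⟨e3, by linarith, ?_⟩
  rw [e3] at h11
  nlinarith

lemma measurableSet_Rect : MeasurableSet Rect := by
  unfold Rect; measurability

lemma quasi_eval1 : Measure.QuasiMeasurePreserving (fun x : V2 => x 1) volume volume :=
  Measure.quasiMeasurePreserving_eval (fun _ : Fin 2 => (volume : Measure ℝ)) 1

/-- A function of bounded variation on `(-1,1)` has one-sided limits. -/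
lemma bv_limits {E : Type*} [NormedAddCommGroup E] [CompleteSpace E]
    {f : ℝ → E} (hf : BoundedVariationOn f (Ioo (-1) 1)) {t : ℝ} (ht : t ∈ Ioo (-1:ℝ) 1) :
    (∃ l, Tendsto f (𝓝[<] t) (𝓝 l)) ∧ ∃ l, Tendsto f (𝓝[>] t) (𝓝 l) := by
  have h1 := hf.exists_tendsto_left t
  have h2 := hf.exists_tendsto_right t
  have hn : Ioo (-1:ℝ) 1 ∈ 𝓝 t := Ioo_mem_nhds ht.1 ht.2
  rw [inter_comm, nhdsWithin_inter_of_mem' (mem_nhdsWithin_of_mem_nhds hn)] at h1 h2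
  exact ⟨h1, h2⟩

lemma bv_ae_cont {E : Type*} [NormedAddCommGroup E] [NormedSpace ℝ E] [FiniteDimensional ℝ E]
    {f : ℝ → E} (hf : BoundedVariationOn f (Ioo (-1) 1)) :
    ∀ᵐ t, t ∈ Ioo (-1:ℝ) 1 → ContinuousAt f t := by
  filter_upwards [hf.locallyBoundedVariationOn.ae_differentiableWithinAt_of_mem] with t h ht
  exact ((h ht).differentiableAt (Ioo_mem_nhds ht.1 ht.2)).continuousAt

/-- Right-continuous representative of a regulated function. -/
lemma exists_regular {X : Type*} [NormedAddCommGroup X] (F : ℝ → X)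
    (hF : ∀ t ∈ Ioo (-1:ℝ) 1, (∃ l, Tendsto F (𝓝[<] t) (𝓝 l)) ∧ ∃ l, Tendsto F (𝓝[>] t) (𝓝 l))
    (hc : ∀ᵐ t, t ∈ Ioo (-1:ℝ) 1 → ContinuousAt F t) :
    ∃ G : ℝ → X, (∀ t ∈ Ioo (-1:ℝ) 1, Tendsto G (𝓝[>] t) (𝓝 (G t)) ∧
        ∃ l, Tendsto G (𝓝[<] t) (𝓝 l)) ∧
      (∀ᵐ t, t ∈ Ioo (-1:ℝ) 1 → G t = F t) ∧
      (∀ K : Set X, IsClosed K → (∀ t ∈ Ioo (-1:ℝ) 1, F t ∈ K) → ∀ t ∈ Ioo (-1:ℝ) 1, G t ∈ K) := by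
  have h2 : ∀ t, ∃ l, t ∈ Ioo (-1:ℝ) 1 → Tendsto F (𝓝[>] t) (𝓝 l) := by
    intro t
    by_cases ht : t ∈ Ioo (-1:ℝ) 1
    · obtain ⟨l, hl⟩ := (hF t ht).2
      exact ⟨l, fun _ => hl⟩
    · exact ⟨0, fun h => absurd h ht⟩
  choose G hG using h2
  have aux : ∀ (O : Set ℝ) (t : ℝ) (l : X), IsOpen O → t ∈ Ioo (-1:ℝ) 1 →
      Tendsto F (𝓝[O] t) (𝓝 l) → Tendsto G (𝓝[O] t) (𝓝 l) := by
    intro O t l hO ht hl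
    rw [(closed_nhds_basis l).tendsto_right_iff]
    rintro V ⟨hV, hVc⟩
    have h1 : ∀ᶠ s in 𝓝[O] t, F s ∈ V := hl hV
    have h3 : ∀ᶠ s in 𝓝[O] t, ∀ᶠ r in 𝓝[O] s, F r ∈ V :=
      eventually_eventually_nhdsWithin.2 h1
    filter_upwards [h3, self_mem_nhdsWithin,
      mem_nhdsWithin_of_mem_nhds (Ioo_mem_nhds ht.1 ht.2)] with s hs hsO hsI
    rw [hO.nhdsWithin_eq hsO] at hs
    exact hVc.mem_of_tendsto (hG s hsI) (mem_nhdsWithin_of_mem_nhds hs)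
  refine ⟨G, ?_, ?_, ?_⟩
  · intro t ht
    refine ⟨aux _ _ _ isOpen_Ioi ht (hG t ht), ?_⟩
    obtain ⟨l, hl⟩ := (hF t ht).1
    exact ⟨l, aux _ _ _ isOpen_Iio ht hl⟩
  · filter_upwards [hc] with t h ht
    exact tendsto_nhds_unique (hG t ht) ((h ht).tendsto.mono_left nhdsWithin_le_nhds)
  · intro K hK hFK t ht
    refine hK.mem_of_tendsto (hG t ht) ?_
    filter_upwards [mem_nhdsWithin_of_mem_nhds (Ioo_mem_nhds ht.1 ht.2)] with s hs using hFK s hs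

/-- Structure of `u` from the bounded variation data. -/
lemma exists_repr {u : V2 → V2} {R : ℝ → Mat2} {ψ : ℝ → V2} (hR : ∀ t ∈ Ioo (-1:ℝ) 1, R t ∈ SO2)
    (hRb : BVm R (Ioo (-1) 1)) (hψb : BVv ψ (Ioo (-1) 1))
    (hu : ∀ᵐ x ∂(volume.restrict Rect), u x = (R (x 1)).mulVec x + ψ (x 1)) :
    ∃ a b : ℝ → V2,
      (∀ t ∈ Ioo (-1:ℝ) 1, Tendsto (fun s => (a s, b s)) (𝓝[>] t) (𝓝 (a t, b t)) ∧
        ∃ l : V2 × V2, Tendsto (fun s => (a s, b s)) (𝓝[<] t) (𝓝 l)) ∧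
      (∀ t ∈ Ioo (-1:ℝ) 1, a t 0 ^ 2 + a t 1 ^ 2 = 1) ∧
      (∀ᵐ x ∂(volume.restrict Rect), u x = x 0 • a (x 1) + b (x 1)) := by
  let Φ : ℝ × EuclideanSpace ℝ (Fin 2 × Fin 2) × EuclideanSpace ℝ (Fin 2) → V2 × V2 :=
    fun p => (fun i => p.2.1 (i, 0), fun i => p.1 * p.2.1 (i, 1) + p.2.2 i)
  have hΦ : Continuous Φ := by fun_prop
  let P : ℝ → ℝ × EuclideanSpace ℝ (Fin 2 × Fin 2) × EuclideanSpace ℝ (Fin 2) :=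
    fun t => (t, mToE (R t), vToE (ψ t))
  have hF1 : ∀ t ∈ Ioo (-1:ℝ) 1, (∃ l, Tendsto (Φ ∘ P) (𝓝[<] t) (𝓝 l)) ∧
      ∃ l, Tendsto (Φ ∘ P) (𝓝[>] t) (𝓝 l) := by
    intro t ht
    obtain ⟨⟨l1, h1⟩, ⟨l2, h2⟩⟩ := bv_limits hRb ht
    obtain ⟨⟨l3, h3⟩, ⟨l4, h4⟩⟩ := bv_limits hψb ht
    have i1 : Tendsto (fun s : ℝ => s) (𝓝[<] t) (𝓝 t) := nhdsWithin_le_nhds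
    have i2 : Tendsto (fun s : ℝ => s) (𝓝[>] t) (𝓝 t) := nhdsWithin_le_nhds
    exact ⟨⟨_, (hΦ.tendsto _).comp (i1.prodMk_nhds (h1.prodMk_nhds h3))⟩,
      ⟨_, (hΦ.tendsto _).comp (i2.prodMk_nhds (h2.prodMk_nhds h4))⟩⟩
  have hF2 : ∀ᵐ t, t ∈ Ioo (-1:ℝ) 1 → ContinuousAt (Φ ∘ P) t := by
    filter_upwards [bv_ae_cont hRb, bv_ae_cont hψb] with t h1 h2 ht
    exact hΦ.continuousAt.comp (continuousAt_id.prodMk ((h1 ht).prodMk (h2 ht)))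
  obtain ⟨G, hG1, hG2, hG3⟩ := exists_regular (Φ ∘ P) hF1 hF2
  refine ⟨fun t => (G t).1, fun t => (G t).2, hG1, ?_, ?_⟩
  · have := hG3 {p : V2 × V2 | p.1 0 ^ 2 + p.1 1 ^ 2 = 1}
      (isClosed_eq (by fun_prop) (by fun_prop)) ?_
    · exact this
    · intro t ht
      exact (SO2_entries (hR t ht)).2.2
  · have hG2' := ae_restrict_of_ae (s := Rect) (quasi_eval1.ae hG2)
    filter_upwards [hu, hG2', ae_restrict_mem measurableSet_Rect] with x h1 h2 h3
    rw [h1]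
    have := h2 h3.2
    rw [this]
    ext i
    simp only [Φ, P, mToE, vToE, Function.comp, Matrix.mulVec, dotProduct, Fin.sum_univ_two, Pi.add_apply, Pi.smul_apply, smul_eq_mul]
    change _ = x 0 * R (x 1) i 0 + (x 1 * R (x 1) i 1 + ψ (x 1) i)
    ring

lemma continuous_vnorm : Continuous vnorm := by
  unfold vnorm; fun_prop

lemma vnorm_eq (v : V2) : vnorm v = ‖(WithLp.toLp 2 v : EuclideanSpace ℝ (Fin 2))‖ := by
  simp [vnorm, EuclideanSpace.norm_eq, Fin.sum_univ_two]

lemma vnorm_nonneg (v : V2) : 0 ≤ vnorm v := Real.sqrt_nonneg _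

lemma vnorm_zero : vnorm 0 = 0 := by simp [vnorm]

lemma vnorm_add_le (v w : V2) : vnorm (v + w) ≤ vnorm v + vnorm w := by
  simp only [vnorm_eq, WithLp.toLp_add]; exact norm_add_le _ _

lemma vnorm_eq_zero {v : V2} (h : vnorm v = 0) : v = 0 := by
  rw [vnorm_eq, norm_eq_zero] at h
  simpa using h

lemma vnorm_neg (v : V2) : vnorm (-v) = vnorm v := by simp [vnorm]

lemma abs_le_vnorm (v : V2) (i : Fin 2) : |v i| ≤ vnorm v := by
  unfold vnorm
  apply Real.abs_le_sqrt
  fin_cases i <;> simp <;> nlinarith [sq_nonneg (v 0), sq_nonneg (v 1)]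

lemma vnorm_le_abs (v : V2) : vnorm v ≤ |v 0| + |v 1| := by
  unfold vnorm
  apply Real.sqrt_le_iff.2
  refine ⟨by positivity, ?_⟩
  nlinarith [sq_abs (v 0), sq_abs (v 1), abs_nonneg (v 0), abs_nonneg (v 1),
    mul_nonneg (abs_nonneg (v 0)) (abs_nonneg (v 1))]

lemma isOpen_Rect : IsOpen Rect := by
  have : Rect = (fun x : V2 => x 0) ⁻¹' Ioo 0 1 ∩ (fun x : V2 => x 1) ⁻¹' Ioo (-1) 1 := rfl
  rw [this]
  exact (isOpen_Ioo.preimage (by fun_prop)).inter (isOpen_Ioo.preimage (by fun_prop))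

lemma ratio_tendsto {u v : V2 → V2} (huv : ∀ᵐ x ∂(volume.restrict Rect), u x = v x)
    {x : V2} (hx : x ∈ Rect) {p : V2 → Prop} (hp : MeasurableSet {z | p z}) {c : V2}
    (h : Tendsto v (𝓝[{z | p z}] x) (𝓝 c)) :
    Tendsto (fun r : ℝ =>
        (∫⁻ z in {z | z ∈ Metric.ball x r ∧ p z},
            ENNReal.ofReal (vnorm (u z - c))) / volume (Metric.ball x r))
      (𝓝[>] 0) (𝓝 0) := by
  rw [ENNReal.tendsto_nhds_zero]
  intro ε hε
  obtain ⟨δ, hδ0, hδε⟩ := ENNReal.lt_iff_exists_nnreal_btwn.1 hε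
  have hδ0' : (0:ℝ) < δ := by exact_mod_cast hδ0
  have h1 : Tendsto (fun z => vnorm (v z - c)) (𝓝[{z | p z}] x) (𝓝 0) := by
    have := (continuous_vnorm.tendsto (c - c)).comp (h.sub_const c)
    simpa [vnorm_zero, Function.comp_def] using this
  have h2 : ∀ᶠ z in 𝓝[{z | p z}] x, vnorm (v z - c) < δ := h1.eventually (gt_mem_nhds hδ0')
  rw [eventually_nhdsWithin_iff] at h2
  obtain ⟨r0, hr0, hb⟩ := Metric.eventually_nhds_iff_ball.1 (h2.and (isOpen_Rect.mem_nhds hx))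
  filter_upwards [Ioo_mem_nhdsGT hr0] with r hr
  apply ENNReal.div_le_of_le_mul
  have hms : MeasurableSet {z | z ∈ Metric.ball x r ∧ p z} :=
    Metric.isOpen_ball.measurableSet.inter hp
  have hsub : Metric.ball x r ⊆ Metric.ball x r0 := Metric.ball_subset_ball hr.2.le
  calc ∫⁻ z in {z | z ∈ Metric.ball x r ∧ p z}, ENNReal.ofReal (vnorm (u z - c))
      ≤ ∫⁻ z in {z | z ∈ Metric.ball x r ∧ p z}, δ := by
        apply lintegral_mono_ae
        rw [ae_restrict_iff' measurableSet_Rect] at huv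
        rw [ae_restrict_iff' hms]
        filter_upwards [huv] with z hz hz2
        have := hb z (hsub hz2.1)
        rw [hz this.2]
        exact ENNReal.ofReal_le_of_le_toReal (by simpa using (this.1 hz2.2).le)
    _ = δ * volume {z | z ∈ Metric.ball x r ∧ p z} := by simp
    _ ≤ ε * volume (Metric.ball x r) := by
        gcongr
        exact fun z hz => hz.1

lemma eq_of_half {u v : V2 → V2} (huv : ∀ᵐ x ∂(volume.restrict Rect), u x = v x)
    {x : V2} (hx : x ∈ Rect) (hv : ContinuousAt v x) {a ν : V2} (hν : vnorm ν = 1)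
    (h : Tendsto (fun r : ℝ =>
        (∫⁻ z in {z | z ∈ Metric.ball x r ∧ 0 < dot (z - x) ν},
            ENNReal.ofReal (vnorm (u z - a))) / volume (Metric.ball x r))
      (𝓝[>] 0) (𝓝 0)) : a = v x := by
  by_contra hne
  have hD : 0 < vnorm (v x - a) := by
    rcases (vnorm_nonneg (v x - a)).eq_or_lt with h0 | h0
    · exact absurd (sub_eq_zero.1 (vnorm_eq_zero h0.symm)).symm hne
    · exact h0
  set D := vnorm (v x - a)
  have h1 : ContinuousAt (fun z => vnorm (v z - a)) x :=
    continuous_vnorm.continuousAt.comp (hv.sub continuousAt_const)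
  have h2 : ∀ᶠ z in 𝓝 x, D / 2 < vnorm (v z - a) :=
    h1.eventually (lt_mem_nhds (by simp only; linarith [show vnorm (v x - a) = D from rfl]))
  obtain ⟨r0, hr0, hb⟩ := Metric.eventually_nhds_iff_ball.1 (h2.and (isOpen_Rect.mem_nhds hx))
  have hlow : ∀ r ∈ Ioo 0 r0, ENNReal.ofReal (D / 32) ≤
      (∫⁻ z in {z | z ∈ Metric.ball x r ∧ 0 < dot (z - x) ν},
            ENNReal.ofReal (vnorm (u z - a))) / volume (Metric.ball x r) := by
    intro r hr
    have hv1 : volume (Metric.ball x r) = ENNReal.ofReal ((2 * r) ^ 2) := by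
      rw [Real.volume_pi_ball _ hr.1]; simp
    rw [ENNReal.le_div_iff_mul_le (Or.inl ?_) (Or.inl ?_)]
    rotate_left
    · rw [hv1]; have := hr.1; simp; positivity
    · rw [hv1]; simp
    have hms : MeasurableSet {z | z ∈ Metric.ball x r ∧ 0 < dot (z - x) ν} := by
      have ho : IsOpen {z : V2 | 0 < dot (z - x) ν} := by
        unfold dot
        exact isOpen_lt (by fun_prop) (by fun_prop)
      exact Metric.isOpen_ball.measurableSet.inter ho.measurableSet
    have hν2 : ν 0 ^ 2 + ν 1 ^ 2 = 1 := by
      unfold vnorm at hν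
      rw [Real.sqrt_eq_one] at hν
      exact hν
    have hsub : Metric.ball (x + (r / 2) • ν) (r / 4) ⊆
        {z | z ∈ Metric.ball x r ∧ 0 < dot (z - x) ν} := by
      intro z hz
      rw [Metric.mem_ball, dist_pi_lt_iff (by linarith [hr.1])] at hz
      have z0 := hz 0
      have z1 := hz 1
      simp only [Real.dist_eq, Pi.add_apply, Pi.smul_apply, smul_eq_mul, abs_lt] at z0 z1
      have hr1 := hr.1
      constructor
      · rw [Metric.mem_ball, dist_pi_lt_iff hr1]
        have b0 : |ν 0| ≤ 1 := by rw [abs_le_one_iff_mul_self_le_one]; nlinarith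
        have b1 : |ν 1| ≤ 1 := by rw [abs_le_one_iff_mul_self_le_one]; nlinarith
        rw [abs_le] at b0 b1
        intro i
        fin_cases i
        · simp only [Real.dist_eq, abs_lt]
          constructor <;> simp <;> nlinarith
        · simp only [Real.dist_eq, abs_lt]
          constructor <;> simp <;> nlinarith
      · simp only [dot, Fin.sum_univ_two, Pi.sub_apply]
        have e0 : (z 0 - x 0 - r / 2 * ν 0) ^ 2 ≤ (r / 4) ^ 2 := by nlinarith
        have e1 : (z 1 - x 1 - r / 2 * ν 1) ^ 2 ≤ (r / 4) ^ 2 := by nlinarith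
        nlinarith [sq_nonneg (z 0 - x 0 - r / 2 * ν 0 + 3 * r / 8 * ν 0),
          sq_nonneg (z 1 - x 1 - r / 2 * ν 1 + 3 * r / 8 * ν 1), sq_nonneg r]
    calc ENNReal.ofReal (D / 32) * volume (Metric.ball x r)
        = ENNReal.ofReal (D / 2) * volume (Metric.ball (x + (r / 2) • ν) (r / 4)) := by
          rw [hv1, Real.volume_pi_ball _ (by linarith [hr.1]), ← ENNReal.ofReal_mul (by positivity),
            ← ENNReal.ofReal_mul (by positivity)]
          congr 1
          simp
          ring
      _ ≤ ENNReal.ofReal (D / 2) * volume {z | z ∈ Metric.ball x r ∧ 0 < dot (z - x) ν} := by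
          gcongr
      _ = ∫⁻ z in {z | z ∈ Metric.ball x r ∧ 0 < dot (z - x) ν}, ENNReal.ofReal (D / 2) := by simp
      _ ≤ _ := by
          apply lintegral_mono_ae
          rw [ae_restrict_iff' measurableSet_Rect] at huv
          rw [ae_restrict_iff' hms]
          filter_upwards [huv] with z hz hz2
          have := hb z (Metric.ball_subset_ball hr.2.le hz2.1)
          rw [hz this.2]
          exact ENNReal.ofReal_le_ofReal this.1.le
  have hlim : ENNReal.ofReal (D / 32) ≤ 0 := by
    refine ge_of_tendsto h ?_
    filter_upwards [Ioo_mem_nhdsGT hr0] with r hr using hlow r hr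
  simp at hlim
  linarith

lemma not_jumpPt {u v : V2 → V2} (huv : ∀ᵐ x ∂(volume.restrict Rect), u x = v x)
    {x : V2} (hx : x ∈ Rect) (hv : ContinuousAt v x) : ¬ JumpPt u x := by
  rintro ⟨a, b, ν, hab, hν, h1, h2⟩
  apply hab
  rw [eq_of_half huv hx hv hν h1]
  refine (eq_of_half huv hx hv (ν := -ν) (by rw [vnorm_neg, hν]) ?_).symm
  have : ∀ z : V2, (0 < dot (z - x) (-ν)) ↔ dot (z - x) ν < 0 := by
    intro z
    simp only [dot, Fin.sum_univ_two, Pi.neg_apply]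
    constructor <;> intro h <;> linarith
  simpa only [this] using h2

lemma jumpPt_of_limits {u : V2 → V2} {a b : ℝ → V2}
    (huv : ∀ᵐ x ∂(volume.restrict Rect), u x = x 0 • a (x 1) + b (x 1))
    {x : V2} (hx : x ∈ Rect) {p q : V2 × V2}
    (hp : Tendsto (fun s => (a s, b s)) (𝓝[>] (x 1)) (𝓝 p))
    (hq : Tendsto (fun s => (a s, b s)) (𝓝[<] (x 1)) (𝓝 q))
    (hne : x 0 • p.1 + p.2 ≠ x 0 • q.1 + q.2) : JumpPt u x := by
  have key : ∀ (O : Set ℝ) (l : V2 × V2), Tendsto (fun s => (a s, b s)) (𝓝[O] (x 1)) (𝓝 l) →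
      Tendsto (fun z : V2 => z 0 • a (z 1) + b (z 1)) (𝓝[{z : V2 | z 1 ∈ O}] x)
        (𝓝 (x 0 • l.1 + l.2)) := by
    intro O l hl
    have e1 : Tendsto (fun z : V2 => z 1) (𝓝[{z : V2 | z 1 ∈ O}] x) (𝓝[O] (x 1)) := by
      refine tendsto_nhdsWithin_iff.2 ⟨?_, ?_⟩
      · exact ((continuous_apply 1).tendsto x).mono_left nhdsWithin_le_nhds
      · filter_upwards [self_mem_nhdsWithin] with z hz using hz
    have e0 : Tendsto (fun z : V2 => z 0) (𝓝[{z : V2 | z 1 ∈ O}] x) (𝓝 (x 0)) :=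
      ((continuous_apply 0).tendsto x).mono_left nhdsWithin_le_nhds
    have e2 := hl.comp e1
    exact (e0.smul (continuous_fst.tendsto _ |>.comp e2)).add (continuous_snd.tendsto _ |>.comp e2)
  refine ⟨_, _, e2, hne, by simp [vnorm, e2], ?_, ?_⟩
  · refine ratio_tendsto huv hx (p := fun z => 0 < dot (z - x) e2) ?_ ?_
    · refine IsOpen.measurableSet ?_
      unfold dot
      exact isOpen_lt (by fun_prop) (by fun_prop)
    · convert! key _ _ hp using 3
      simp [dot, e2]
  · refine ratio_tendsto huv hx (p := fun z => dot (z - x) e2 < 0) ?_ ?_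
    · refine IsOpen.measurableSet ?_
      unfold dot
      exact isOpen_lt (by fun_prop) (by fun_prop)
    · convert! key _ _ hq using 3
      simp [dot, e2]

lemma slice_hausdorff (t q : ℝ) :
    Measure.hausdorffMeasure (1 : ℝ) {x : V2 | x 1 = t ∧ x 0 ∈ Ioo (0:ℝ) 1 ∧ x 0 ≠ q} = 1 := by
  have hi : Isometry (fun s : ℝ => (![s, t] : V2)) := by
    refine Isometry.of_dist_eq fun s s' => ?_
    rw [dist_pi_def]
    simp [Fin.univ_succ]
  have himg : {x : V2 | x 1 = t ∧ x 0 ∈ Ioo (0:ℝ) 1 ∧ x 0 ≠ q} =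
      (fun s : ℝ => (![s, t] : V2)) '' (Ioo 0 1 \ {q}) := by
    ext x
    constructor
    · rintro ⟨h1, h2, h3⟩
      refine ⟨x 0, ⟨h2, h3⟩, ?_⟩
      ext i; fin_cases i <;> simp [h1]
    · rintro ⟨s, ⟨h1, h2⟩, rfl⟩
      exact ⟨rfl, h1, h2⟩
  rw [himg, hi.hausdorffMeasure_image (Or.inl zero_le_one), hausdorffMeasure_real,
    measure_sdiff_null (by simp)]
  simp

/-- The set of heights at which the one-dimensional profile is discontinuous is finite. -/
lemma jumps_finite {u : V2 → V2} {a b : ℝ → V2}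
    (hab : ∀ t ∈ Ioo (-1:ℝ) 1, Tendsto (fun s => (a s, b s)) (𝓝[>] t) (𝓝 (a t, b t)) ∧
        ∃ l : V2 × V2, Tendsto (fun s => (a s, b s)) (𝓝[<] t) (𝓝 l))
    (huv : ∀ᵐ x ∂(volume.restrict Rect), u x = x 0 • a (x 1) + b (x 1))
    (hH : Measure.hausdorffMeasure (1 : ℝ) (jumpSet Rect u) ≠ ⊤) :
    {t ∈ Ioo (-1:ℝ) 1 | ¬ ContinuousAt (fun s => (a s, b s)) t}.Finite := by
  set T := {t ∈ Ioo (-1:ℝ) 1 | ¬ ContinuousAt (fun s => (a s, b s)) t} with hT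
  have hq : ∀ t, ∃ q : ℝ, t ∈ T →
      {x : V2 | x 1 = t ∧ x 0 ∈ Ioo (0:ℝ) 1 ∧ x 0 ≠ q} ⊆ jumpSet Rect u := by
    intro t
    by_cases ht : t ∈ T
    swap
    · exact ⟨0, fun h => absurd h ht⟩
    obtain ⟨h1, l, h2⟩ := hab t ht.1
    have hl : l ≠ (a t, b t) := by
      rintro rfl
      apply ht.2
      rw [continuousAt_iff_continuous_left'_right']
      exact ⟨h2, h1⟩
    -- at most one bad abscissa
    have hbad : ∃ q : ℝ, ∀ s : ℝ, s • a t + b t = s • l.1 + l.2 → s = q := by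
      by_contra hcon
      push Not at hcon
      obtain ⟨s1, e1, -⟩ := hcon 0
      obtain ⟨s2, e2, hne⟩ := hcon s1
      apply hl
      have hfst : l.1 = a t := by
        ext i
        have f1 := congrFun e1 i
        have f2 := congrFun e2 i
        simp only [Pi.add_apply, Pi.smul_apply, smul_eq_mul] at f1 f2
        have : (s2 - s1) * (l.1 i - a t i) = 0 := by linarith
        rcases mul_eq_zero.1 this with h | h
        · exact absurd (sub_eq_zero.1 h) hne
        · linarith
      rw [hfst] at e1
      exact Prod.ext hfst (add_left_cancel e1).symm
    obtain ⟨q, hq⟩ := hbad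
    refine ⟨q, fun _ => ?_⟩
    rintro x ⟨rfl, hx0, hxq⟩
    have hx : x ∈ Rect := ⟨hx0, ht.1⟩
    exact ⟨hx, jumpPt_of_limits huv hx h1 h2 fun h => hxq (hq _ h)⟩
  choose q hq using hq
  by_contra hinf
  have hinf : T.Infinite := hinf
  apply hH
  apply ENNReal.eq_top_of_forall_nnreal_le
  intro r
  obtain ⟨n, hn⟩ := exists_nat_ge r
  obtain ⟨F, hFT, hFc⟩ := hinf.exists_subset_card_eq n
  calc (r : ℝ≥0∞) ≤ n := by exact_mod_cast hn
    _ = ∑ t ∈ F, Measure.hausdorffMeasure (1 : ℝ)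
          {x : V2 | x 1 = t ∧ x 0 ∈ Ioo (0:ℝ) 1 ∧ x 0 ≠ q t} := by
        rw [Finset.sum_congr rfl fun t _ => slice_hausdorff t (q t)]
        simp [hFc]
    _ = Measure.hausdorffMeasure (1 : ℝ)
          (⋃ t ∈ F, {x : V2 | x 1 = t ∧ x 0 ∈ Ioo (0:ℝ) 1 ∧ x 0 ≠ q t}) := by
        rw [measure_biUnion_finset]
        · intro t _ t' _ htt
          refine Set.disjoint_left.2 ?_
          rintro x ⟨h1, -⟩ ⟨h2, -⟩
          exact htt (h1.symm.trans h2)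
        · intro t _
          have m0 : Measurable fun x : V2 => x 0 := measurable_pi_apply 0
          have m1 : Measurable fun x : V2 => x 1 := measurable_pi_apply 1
          exact (m1 (measurableSet_singleton t)).inter
            ((m0 measurableSet_Ioo).inter (m0 (measurableSet_singleton (q t)).compl))
    _ ≤ _ := by
        apply measure_mono
        exact iUnion₂_subset fun t ht => hq t (hFT ht)

lemma jumpPt_height {u : V2 → V2} {a b : ℝ → V2}
    (huv : ∀ᵐ x ∂(volume.restrict Rect), u x = x 0 • a (x 1) + b (x 1))
    {x : V2} (hx : x ∈ Rect) (hj : JumpPt u x) :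
    ¬ ContinuousAt (fun s => (a s, b s)) (x 1) := by
  intro hc
  refine not_jumpPt huv hx ?_ hj
  have h1 : ContinuousAt (fun z : V2 => z 1) x := (continuous_apply 1).continuousAt
  have h0 : ContinuousAt (fun z : V2 => z 0) x := (continuous_apply 0).continuousAt
  have h2 : ContinuousAt (fun z : V2 => (a (z 1), b (z 1))) x :=
    ContinuousAt.comp (f := fun z : V2 => z 1) (g := fun s => (a s, b s)) hc h1
  exact (h0.smul h2.fst).add h2.snd

/-- Uniqueness of the absolutely continuous part. -/
lemma gu_unique {u : V2 → V2} {gu : V2 → Mat2} {σ : Measure V2} {gs : V2 → Mat2}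
    (H : HasBVDerivOn Rect u gu σ gs) {U : Set V2} (hU : IsOpen U) (hUR : U ⊆ Rect)
    (i j : Fin 2) (g : V2 → ℝ) (hg : IntegrableOn g U)
    (hibp : ∀ φ : V2 → ℝ, ContDiff ℝ (⊤ : ℕ∞) φ → HasCompactSupport φ → tsupport φ ⊆ U →
      ∫ x in Rect, u x i * pd j φ x = - ∫ x in U, φ x * g x) :
    ∀ᵐ x ∂(volume.restrict U), gu x i j = g x := by
  classical
  have : IsFiniteMeasure σ := ⟨lt_top_iff_ne_top.2 H.fin⟩
  obtain ⟨N, hNm, hN1, hN2⟩ := H.perp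
  -- `σ N = 0`, `volume Nᶜ = 0`
  set f : V2 → ℝ := N.piecewise (fun x => gu x i j - g x) (fun x => gs x i j) with hf
  set μ : Measure V2 := volume.restrict U + σ with hμ
  have hgu : IntegrableOn (fun x => gu x i j) U := (H.int_gu i j).mono_set hUR
  have hd : Integrable (fun x => gu x i j - g x) (volume.restrict U) := hgu.sub hg
  have aeN : ∀ᵐ x ∂(volume.restrict U), x ∈ N := by
    refine ae_restrict_of_ae ?_
    rw [ae_iff]; exact hN2
  have aeNc : ∀ᵐ x ∂σ, x ∉ N := by
    rw [ae_iff]; simpa using hN1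
  have f1 : f =ᵐ[volume.restrict U] fun x => gu x i j - g x := by
    filter_upwards [aeN] with x hx
    simp [hf, hx]
  have f2 : f =ᵐ[σ] fun x => gs x i j := by
    filter_upwards [aeNc] with x hx
    simp [hf, hx]
  have hgsb : ∀ᵐ x ∂σ, ‖gs x i j‖ ≤ 1 := by
    filter_upwards [H.unit] with x hx
    rw [← hx, mnorm, Real.norm_eq_abs]
    apply Real.abs_le_sqrt
    fin_cases i <;> fin_cases j <;> simp [Fin.sum_univ_two] <;> nlinarith [sq_nonneg (gs x 0 0), sq_nonneg (gs x 0 1), sq_nonneg (gs x 1 0), sq_nonneg (gs x 1 1)]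
  have hgs : Integrable (fun x => gs x i j) σ :=
    Integrable.of_bound (H.meas_gs i j).aestronglyMeasurable 1 hgsb
  have hfi : Integrable f μ := by
    rw [hμ, integrable_add_measure]
    exact ⟨hd.congr f1.symm, hgs.congr f2.symm⟩
  have main := hU.ae_eq_zero_of_integral_contDiff_smul_eq_zero
    (μ := μ) (f := f) (hfi.locallyIntegrable.locallyIntegrableOn _) (by
    intro φ hφ hφc hφs
    obtain ⟨C, hC⟩ := hφc.exists_bound_of_continuous hφ.continuous
    have m1 : ∀ ν : Measure V2, AEStronglyMeasurable φ ν := fun ν =>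
      hφ.continuous.aestronglyMeasurable
    have b1 : ∀ {ν : Measure V2} {k : V2 → ℝ}, Integrable k ν → Integrable (fun x => φ x * k x) ν :=
      fun hk => hk.bdd_mul (m1 _) (Eventually.of_forall hC)
    have e := H.ibp φ hφ hφc (hφs.trans hUR) i j
    rw [hibp φ hφ hφc hφs] at e
    have e3 : ∫ x in Rect, φ x * gu x i j = ∫ x in U, φ x * gu x i j := by
      apply setIntegral_eq_of_subset_of_forall_sdiff_eq_zero measurableSet_Rect hUR
      intro x hx
      rw [image_eq_zero_of_notMem_tsupport (fun h => hx.2 (hφs h)), zero_mul]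
    rw [e3] at e
    simp only [smul_eq_mul]
    rw [hμ, integral_add_measure (b1 (hd.congr f1.symm)) (b1 (hgs.congr f2.symm))]
    have c1 : ∫ x in U, φ x * f x = (∫ x in U, φ x * gu x i j) - ∫ x in U, φ x * g x := by
      rw [← integral_sub (b1 hgu) (b1 hg)]
      apply integral_congr_ae
      filter_upwards [f1] with x hx
      rw [hx]; ring
    have c2 : ∫ x, φ x * f x ∂σ = ∫ x, φ x * gs x i j ∂σ := by
      apply integral_congr_ae
      filter_upwards [f2] with x hx
      rw [hx]
    rw [c1, c2]
    linarith)
  have main' : ∀ᵐ x ∂(volume.restrict U), x ∈ U → f x = 0 := by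
    rw [hμ, ae_add_measure_iff] at main
    exact main.1
  filter_upwards [main', f1, ae_restrict_mem hU.measurableSet] with x h1 h2 h3
  rw [h1 h3] at h2
  linarith
lemma ibp_lip {f : ℝ → ℝ} {K : NNReal} (hf : LipschitzWith K f) {θ : V2 → ℝ}
    (hθ : ContDiff ℝ (⊤ : ℕ∞) θ) (hθc : HasCompactSupport θ) :
    (∫ x : V2, f (x 1) * pd 0 θ x = 0) ∧
    (∫ x : V2, f (x 1) * pd 1 θ x = - ∫ x : V2, deriv f (x 1) * θ x) := by
  obtain ⟨D, hD⟩ := ContDiff.lipschitzWith_of_hasCompactSupport hθc hθ (by simp)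
  have hF : LipschitzWith K (fun x : V2 => f (x 1)) := by
    have := hf.comp (LipschitzWith.eval (α := fun _ : Fin 2 => ℝ) 1)
    simpa [Function.comp_def] using this
  have hdiff : ∀ x, DifferentiableAt ℝ θ x := fun x => (hθ.differentiable (by simp)) x
  have key : ∀ j : Fin 2, ∫ x : V2, f (x 1) * pd j θ x =
      - ∫ x : V2, lineDeriv ℝ (fun x : V2 => f (x 1)) x (Pi.single j 1) * θ x := by
    intro j
    rw [LipschitzWith.integral_lineDeriv_mul_eq hF hD hθc, ← integral_neg]
    congr 1
    ext x
    rw [(hdiff x).lineDeriv_eq_fderiv, map_neg]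
    simp only [pd]
    ring
  constructor
  · rw [key 0]
    have : ∀ x : V2, lineDeriv ℝ (fun x : V2 => f (x 1)) x (Pi.single 0 1) = 0 := by
      intro x
      simp [lineDeriv]
    simp [this]
  · rw [key 1]
    have : ∀ x : V2, lineDeriv ℝ (fun x : V2 => f (x 1)) x (Pi.single 1 1) = deriv f (x 1) := by
      intro x
      simp only [lineDeriv, Pi.add_apply, Pi.smul_apply, Pi.single_eq_same, smul_eq_mul, mul_one]
      rw [deriv_comp_const_add, add_zero]
    simp [this]

lemma pd_mul_x0 (j : Fin 2) {φ : V2 → ℝ} (hφ : ContDiff ℝ (⊤ : ℕ∞) φ) (x : V2) :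
    pd j (fun x => x 0 * φ x) x = (Pi.single j 1 : V2) 0 * φ x + x 0 * pd j φ x := by
  unfold pd
  have h1 : HasFDerivAt (fun x : V2 => x 0) (ContinuousLinearMap.proj (R := ℝ) (φ := fun _ : Fin 2 => ℝ) 0) x :=
    (ContinuousLinearMap.proj (R := ℝ) (φ := fun _ : Fin 2 => ℝ) 0).hasFDerivAt
  have h2 : HasFDerivAt φ (fderiv ℝ φ x) x := ((hφ.differentiable (by simp)) x).hasFDerivAt
  have h3 : HasFDerivAt (fun x : V2 => x 0 * φ x) _ x := h1.mul h2
  rw [h3.fderiv]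
  simp
  ring

lemma Rect_subset_Icc : Rect ⊆ Icc (![0, -1] : V2) ![1, 1] := by
  rintro x ⟨h0, h1⟩
  constructor <;> intro i <;> fin_cases i <;> simp <;> linarith [h0.1, h0.2, h1.1, h1.2]

lemma volume_Rect_lt_top : volume Rect < ⊤ :=
  (measure_mono Rect_subset_Icc).trans_lt isCompact_Icc.measure_lt_top

lemma pd_continuous {j : Fin 2} {φ : V2 → ℝ} (hφ : ContDiff ℝ (⊤ : ℕ∞) φ) : Continuous (pd j φ) := by
  unfold pd
  exact (hφ.continuous_fderiv (by simp)).clm_apply continuous_const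

lemma pd_eq_zero {j : Fin 2} {φ : V2 → ℝ} {x : V2} (hx : x ∉ tsupport φ) : pd j φ x = 0 := by
  unfold pd
  have : fderiv ℝ φ x = 0 := by
    by_contra h
    exact hx (support_fderiv_subset ℝ h)
  simp [this]

lemma pd_hasCompactSupport {j : Fin 2} {φ : V2 → ℝ} (hφ : HasCompactSupport φ) :
    HasCompactSupport (pd j φ) :=
  HasCompactSupport.intro hφ fun _ hx => pd_eq_zero hx

/-- The approximate gradient on a strip where the profile is Lipschitz. -/
lemma gu_strip {u : V2 → V2} {gu : V2 → Mat2} {σ : Measure V2} {gs : V2 → Mat2}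
    (H : HasBVDerivOn Rect u gu σ gs) (i : Fin 2) {α β : ℝ → ℝ} {p q : ℝ}
    (hpq : Ioo p q ⊆ Ioo (-1) 1) {K : NNReal}
    (hα : LipschitzOnWith K α (Ioo p q)) (hβ : LipschitzOnWith K β (Ioo p q))
    (hu : ∀ᵐ x ∂(volume.restrict Rect), u x i = x 0 * α (x 1) + β (x 1)) :
    ∀ᵐ x ∂(volume.restrict Rect), x 1 ∈ Ioo p q →
      gu x i 0 = α (x 1) ∧ gu x i 1 = x 0 * deriv α (x 1) + deriv β (x 1) := by
  obtain ⟨α', hα', eα⟩ := hα.extend_real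
  obtain ⟨β', hβ', eβ⟩ := hβ.extend_real
  set U : Set V2 := {x | x ∈ Rect ∧ x 1 ∈ Ioo p q} with hUdef
  have hUo : IsOpen U := isOpen_Rect.inter (isOpen_Ioo.preimage (by fun_prop))
  have hUR : U ⊆ Rect := fun x hx => hx.1
  have m0 : Measurable fun x : V2 => x 0 := measurable_pi_apply 0
  have m1 : Measurable fun x : V2 => x 1 := measurable_pi_apply 1
  -- the integrals of `u` against derivatives of test functions
  have hstart : ∀ (j : Fin 2) (φ : V2 → ℝ), ContDiff ℝ (⊤ : ℕ∞) φ → HasCompactSupport φ →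
      tsupport φ ⊆ U → ∫ x in Rect, u x i * pd j φ x =
        (∫ x : V2, α' (x 1) * pd j (fun x => x 0 * φ x) x)
          - (∫ x : V2, (Pi.single j 1 : V2) 0 * (φ x * α' (x 1)))
          + ∫ x : V2, β' (x 1) * pd j φ x := by
    intro j φ hφ hφc hφs
    have hx0 : ContDiff ℝ (⊤ : ℕ∞) (fun x : V2 => x 0 * φ x) := by fun_prop
    have hx0c : HasCompactSupport (fun x : V2 => x 0 * φ x) := hφc.mul_left
    have hcα : Continuous fun x : V2 => α' (x 1) := hα'.continuous.comp (by fun_prop)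
    have hcβ : Continuous fun x : V2 => β' (x 1) := hβ'.continuous.comp (by fun_prop)
    have i1 : Integrable (fun x : V2 => α' (x 1) * pd j (fun x => x 0 * φ x) x) :=
      (hcα.mul (pd_continuous hx0)).integrable_of_hasCompactSupport
        (pd_hasCompactSupport hx0c).mul_left
    have i2 : Integrable (fun x : V2 => (Pi.single j 1 : V2) 0 * (φ x * α' (x 1))) :=
      (continuous_const.mul (hφ.continuous.mul hcα)).integrable_of_hasCompactSupport
        hφc.mul_right.mul_left
    have i3 : Integrable (fun x : V2 => β' (x 1) * pd j φ x) :=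
      (hcβ.mul (pd_continuous hφ)).integrable_of_hasCompactSupport
        (pd_hasCompactSupport hφc).mul_left
    have i12 : Integrable (fun x : V2 => α' (x 1) * pd j (fun x => x 0 * φ x) x
        - (Pi.single j 1 : V2) 0 * (φ x * α' (x 1))) := i1.sub i2
    rw [← integral_sub i1 i2, ← integral_add i12 i3, ← integral_indicator measurableSet_Rect]
    apply integral_congr_ae
    rw [ae_restrict_iff' measurableSet_Rect] at hu
    filter_upwards [hu] with x hx
    rw [pd_mul_x0 j hφ x]
    by_cases hxs : x ∈ tsupport φ
    · have hxU := hφs hxs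
      simp only [indicator_of_mem hxU.1, Pi.sub_apply]
      rw [hx hxU.1, eα hxU.2, eβ hxU.2]
      ring
    · have z1 : pd j φ x = 0 := pd_eq_zero hxs
      have z2 : φ x = 0 := image_eq_zero_of_notMem_tsupport hxs
      simp [indicator, z1, z2]
  have hrest : ∀ (φ : V2 → ℝ), tsupport φ ⊆ U → ∀ k : V2 → ℝ,
      ∫ x in U, φ x * k x = ∫ x : V2, φ x * k x := by
    intro φ hφs k
    apply setIntegral_eq_integral_of_forall_compl_eq_zero
    intro x hx
    rw [image_eq_zero_of_notMem_tsupport (fun h => hx (hφs h)), zero_mul]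
  have hfinU : IsFiniteMeasure (volume.restrict U) :=
    ⟨by simpa using (measure_mono hUR).trans_lt volume_Rect_lt_top⟩
  have A0 := gu_unique H hUo hUR i 0 (fun x => α' (x 1))
    ((((hα'.continuous.comp (by fun_prop : Continuous fun x : V2 => x 1))).integrableOn_Icc).mono_set
      (hUR.trans Rect_subset_Icc)) (by
      intro φ hφ hφc hφs
      have hx0 : ContDiff ℝ (⊤ : ℕ∞) (fun x : V2 => x 0 * φ x) := by fun_prop
      have hx0c : HasCompactSupport (fun x : V2 => x 0 * φ x) := hφc.mul_left
      rw [hstart 0 φ hφ hφc hφs, (ibp_lip hα' hx0 hx0c).1, (ibp_lip hβ' hφ hφc).1, hrest φ hφs]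
      simp)
  have A1 := gu_unique H hUo hUR i 1 (fun x => x 0 * deriv α' (x 1) + deriv β' (x 1))
    (by
      have md : Measurable (fun x : V2 => x 0 * deriv α' (x 1) + deriv β' (x 1)) :=
        (m0.mul ((measurable_deriv α').comp m1)).add ((measurable_deriv β').comp m1)
      refine Integrable.of_bound md.aestronglyMeasurable (K + K) ?_
      filter_upwards [ae_restrict_mem hUo.measurableSet] with x hx
      have b1 := norm_deriv_le_of_lipschitz hα' (x₀ := x 1)
      have b2 := norm_deriv_le_of_lipschitz hβ' (x₀ := x 1)
      have b3 : ‖x 0‖ ≤ 1 := by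
        rw [Real.norm_eq_abs, abs_le]; constructor <;> linarith [hx.1.1.1, hx.1.1.2]
      refine (norm_add_le _ _).trans (add_le_add ?_ b2)
      rw [norm_mul]
      calc _ ≤ 1 * (K : ℝ) := mul_le_mul b3 b1 (norm_nonneg _) zero_le_one
        _ = K := one_mul _)
    (by
      intro φ hφ hφc hφs
      have hx0 : ContDiff ℝ (⊤ : ℕ∞) (fun x : V2 => x 0 * φ x) := by fun_prop
      have hx0c : HasCompactSupport (fun x : V2 => x 0 * φ x) := hφc.mul_left
      rw [hstart 1 φ hφ hφc hφs, (ibp_lip hα' hx0 hx0c).2, (ibp_lip hβ' hφ hφc).2, hrest φ hφs]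
      have i1 : Integrable (fun x : V2 => deriv α' (x 1) * (x 0 * φ x)) :=
        (hx0.continuous.integrable_of_hasCompactSupport hx0c).bdd_mul
          ((measurable_deriv α').comp m1).aestronglyMeasurable
          (Eventually.of_forall fun x => norm_deriv_le_of_lipschitz hα')
      have i2 : Integrable (fun x : V2 => deriv β' (x 1) * φ x) :=
        (hφ.continuous.integrable_of_hasCompactSupport hφc).bdd_mul
          ((measurable_deriv β').comp m1).aestronglyMeasurable
          (Eventually.of_forall fun x => norm_deriv_le_of_lipschitz hβ')
      have e : ∫ x : V2, φ x * (x 0 * deriv α' (x 1) + deriv β' (x 1)) =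
          (∫ x : V2, deriv α' (x 1) * (x 0 * φ x)) + ∫ x : V2, deriv β' (x 1) * φ x := by
        rw [← integral_add i1 i2]
        congr 1
        ext x
        ring
      rw [e]
      simp
      ring)
  rw [ae_restrict_iff' hUo.measurableSet] at A0 A1
  rw [ae_restrict_iff' measurableSet_Rect]
  filter_upwards [A0, A1] with x h0 h1 hxR hx1
  have hxU : x ∈ U := ⟨hxR, hx1⟩
  have d1 : deriv α (x 1) = deriv α' (x 1) := (eα.eventuallyEq_of_mem (isOpen_Ioo.mem_nhds hx1)).deriv_eq
  have d2 : deriv β (x 1) = deriv β' (x 1) := (eβ.eventuallyEq_of_mem (isOpen_Ioo.mem_nhds hx1)).deriv_eq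
  rw [h0 hxU, h1 hxU, eα hx1, d1, d2]
  exact ⟨rfl, rfl⟩

lemma ae_of_strips {X : Type*} [MeasurableSpace X] {μ : Measure X} (h : X → ℝ) (S : Finset ℝ)
    (hS : ∀ᵐ x ∂μ, h x ∉ S) (P : X → Prop)
    (H : ∀ p q : ℝ, Icc p q ⊆ Ioo (-1) 1 → (∀ r ∈ S, r ∉ Icc p q) →
      ∀ᵐ x ∂μ, h x ∈ Ioo p q → P x) : ∀ᵐ x ∂μ, h x ∈ Ioo (-1:ℝ) 1 → P x := by
  have key : ∀ᵐ x ∂μ, ∀ p q : ℚ, Icc (p:ℝ) q ⊆ Ioo (-1) 1 → (∀ r ∈ S, r ∉ Icc (p:ℝ) q) →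
      h x ∈ Ioo (p:ℝ) q → P x := by
    rw [ae_all_iff]; intro p
    rw [ae_all_iff]; intro q
    by_cases h1 : Icc (p:ℝ) q ⊆ Ioo (-1) 1
    · by_cases h2 : ∀ r ∈ S, r ∉ Icc (p:ℝ) q
      · filter_upwards [H p q h1 h2] with x hx _ _ h3 using hx h3
      · exact Eventually.of_forall fun x _ h => absurd h h2
    · exact Eventually.of_forall fun x h => absurd h h1
  filter_upwards [key, hS] with x hx hxS hxI
  have ho : IsOpen (Ioo (-1:ℝ) 1 \ (S : Set ℝ)) := isOpen_Ioo.sdiff S.finite_toSet.isClosed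
  have hm : h x ∈ Ioo (-1:ℝ) 1 \ (S : Set ℝ) := ⟨hxI, by simpa using hxS⟩
  obtain ⟨ε, hε, hb⟩ := Metric.isOpen_iff.1 ho _ hm
  obtain ⟨p, hp1, hp2⟩ := exists_rat_btwn (show h x - ε < h x by linarith)
  obtain ⟨q, hq1, hq2⟩ := exists_rat_btwn (show h x < h x + ε by linarith)
  have hsub : Icc (p:ℝ) q ⊆ Ioo (-1:ℝ) 1 \ (S : Set ℝ) := by
    refine Subset.trans ?_ hb
    intro y hy
    rw [Metric.mem_ball, Real.dist_eq, abs_lt]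
    constructor <;> linarith [hy.1, hy.2]
  exact hx p q (fun y hy => (hsub hy).1) (fun r hr hy => (hsub hy).2 (by simpa using hr)) ⟨hp2, hq1⟩

/-- Piecewise Lipschitz scalar functions. -/
def PLr (S : Finset ℝ) (L : ℝ) (f : ℝ → ℝ) : Prop :=
  ∀ s₁ ∈ Ioo (-1:ℝ) 1, ∀ s₂ ∈ Ioo (-1:ℝ) 1, s₁ ≤ s₂ →
    (∀ r ∈ S, r ∉ Icc s₁ s₂) → |f s₂ - f s₁| ≤ L * (s₂ - s₁)

lemma PLr.lip {S : Finset ℝ} {L : ℝ} {f : ℝ → ℝ} (hf : PLr S L f) (hL : 0 ≤ L) {p q : ℝ}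
    (hpq : Icc p q ⊆ Ioo (-1) 1) (hS : ∀ r ∈ S, r ∉ Icc p q) :
    LipschitzOnWith L.toNNReal f (Icc p q) := by
  have aux : ∀ x ∈ Icc p q, ∀ y ∈ Icc p q, x ≤ y → |f y - f x| ≤ L * (y - x) := by
    intro x hx y hy hxy
    exact hf x (hpq hx) y (hpq hy) hxy fun r hr h => hS r hr ⟨hx.1.trans h.1, h.2.trans hy.2⟩
  apply LipschitzOnWith.of_dist_le_mul
  intro x hx y hy
  rw [Real.coe_toNNReal _ hL, Real.dist_eq, Real.dist_eq]
  rcases le_total x y with h | h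
  · rw [abs_sub_comm, abs_sub_comm x y, abs_of_nonneg (sub_nonneg.2 h)]
    exact aux x hx y hy h
  · rw [abs_of_nonneg (sub_nonneg.2 h)]
    exact aux y hy x hx h

lemma ae_notMem_Rect (S : Finset ℝ) : ∀ᵐ x ∂(volume.restrict Rect), x 1 ∉ S := by
  apply ae_restrict_of_ae
  have : ∀ᵐ t : ℝ, t ∉ S := by
    have := S.finite_toSet.countable.ae_notMem (volume : Measure ℝ)
    simpa using this
  exact quasi_eval1.ae this

lemma PLr.ae_diff {S : Finset ℝ} {L : ℝ} {f : ℝ → ℝ} (hf : PLr S L f) (hL : 0 ≤ L) :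
    ∀ᵐ t : ℝ, t ∈ Ioo (-1:ℝ) 1 → DifferentiableAt ℝ f t := by
  refine ae_of_strips (fun t => t) S ?_ _ ?_
  · have := S.finite_toSet.countable.ae_notMem (volume : Measure ℝ)
    simpa using this
  · intro p q hpq hS
    have := (hf.lip hL hpq hS).ae_differentiableWithinAt_of_mem (μ := volume)
    filter_upwards [this] with t ht htI
    exact (ht (Ioo_subset_Icc_self htI)).differentiableAt (Icc_mem_nhds htI.1 htI.2)

lemma gu_global {u : V2 → V2} {gu : V2 → Mat2} {σ : Measure V2} {gs : V2 → Mat2}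
    (H : HasBVDerivOn Rect u gu σ gs) (i : Fin 2) {α β : ℝ → ℝ} {S : Finset ℝ} {L : ℝ}
    (hL : 0 ≤ L) (hα : PLr S L α) (hβ : PLr S L β)
    (hu : ∀ᵐ x ∂(volume.restrict Rect), u x i = x 0 * α (x 1) + β (x 1)) :
    ∀ᵐ x ∂(volume.restrict Rect), x 1 ∈ Ioo (-1:ℝ) 1 →
      gu x i 0 = α (x 1) ∧ gu x i 1 = x 0 * deriv α (x 1) + deriv β (x 1) := by
  refine ae_of_strips (fun x : V2 => x 1) S (ae_notMem_Rect S) _ ?_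
  intro p q hpq hS
  exact gu_strip H i (Ioo_subset_Icc_self.trans hpq)
    ((hα.lip hL hpq hS).mono Ioo_subset_Icc_self) ((hβ.lip hL hpq hS).mono Ioo_subset_Icc_self) hu

/-- From an identity a.e. in `Rect` affine in `x 0` to a.e. identities of coefficients. -/
lemma affine_ae {c d : ℝ → ℝ} (h : ∀ᵐ x ∂(volume.restrict Rect), x 0 * c (x 1) + d (x 1) = 1) :
    ∀ᵐ t : ℝ, t ∈ Ioo (-1:ℝ) 1 → c t = 0 ∧ d t = 1 := by
  rw [ae_restrict_iff' measurableSet_Rect] at h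
  have h2 : ∀ᵐ z : ℝ × ℝ, z.1 ∈ Ioo (-1:ℝ) 1 → z.2 ∈ Ioo (0:ℝ) 1 → z.2 * c z.1 + d z.1 = 1 := by
    have q1 := ((volume_preserving_finTwoArrow ℝ).symm).quasiMeasurePreserving.ae h
    have q2 := (Measure.measurePreserving_swap (μ := (volume : Measure ℝ))
      (ν := (volume : Measure ℝ))).quasiMeasurePreserving.ae (p := fun z : ℝ × ℝ =>
        (MeasurableEquiv.finTwoArrow.symm z : V2) ∈ Rect →
        (MeasurableEquiv.finTwoArrow.symm z : V2) 0 * c ((MeasurableEquiv.finTwoArrow.symm z : V2) 1)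
          + d ((MeasurableEquiv.finTwoArrow.symm z : V2) 1) = 1) q1
    filter_upwards [q2] with z hz h1 h2
    exact hz ⟨h2, h1⟩
  have h3 := Measure.ae_ae_of_ae_prod h2
  filter_upwards [h3] with t ht htI
  have h4 : ∀ᵐ s : ℝ, s ∈ Ioo (0:ℝ) 1 → s * c t + d t = 1 := by
    filter_upwards [ht] with s hs hsI using hs htI hsI
  have ex : ∀ p q : ℝ, p < q → 0 ≤ p → q ≤ 1 → ∃ s ∈ Ioo p q, s * c t + d t = 1 := by
    intro p q hpq hp hq
    by_contra! hcon
    have : ∀ᵐ s : ℝ, s ∉ Ioo p q := by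
      filter_upwards [h4] with s hs hsI
      exact hcon s hsI (hs ⟨hp.trans_lt hsI.1, hsI.2.trans_le hq⟩)
    have h0 : volume (Ioo p q) = 0 := by
      rw [ae_iff] at this
      simp only [not_not] at this
      exact this
    rw [Real.volume_Ioo, ENNReal.ofReal_eq_zero] at h0
    linarith
  obtain ⟨s, hs, e1⟩ := ex 0 (1/2) (by norm_num) le_rfl (by norm_num)
  obtain ⟨r, hr, e2⟩ := ex (1/2) 1 (by norm_num) (by norm_num) le_rfl
  have hc : (r - s) * c t = 0 := by linarith
  have hrs : r - s ≠ 0 := by have := hs.2; have := hr.1; intro h; linarith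
  have : c t = 0 := (mul_eq_zero.1 hc).resolve_left hrs
  exact ⟨this, by simpa [this] using e1⟩

lemma abs_le_mnorm (A : Mat2) (i j : Fin 2) : |A i j| ≤ mnorm A := by
  rw [mnorm]
  apply Real.abs_le_sqrt
  fin_cases i <;> fin_cases j <;> simp [Fin.sum_univ_two] <;> nlinarith [sq_nonneg (A 0 0), sq_nonneg (A 0 1), sq_nonneg (A 1 0), sq_nonneg (A 1 1)]

lemma test_bound {u : V2 → V2} {gu : V2 → Mat2} {σ : Measure V2} {gs : V2 → Mat2}
    (H : HasBVDerivOn Rect u gu σ gs) {M : ℝ}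
    (hM : ∀ᵐ x ∂(volume.restrict Rect), mnorm (gu x) ≤ M) {T : Set ℝ}
    (hσ : σ {x : V2 | x 1 ∉ T} = 0) (hM0 : 0 ≤ M) (i : Fin 2) {φ : V2 → ℝ}
    (hφ : ContDiff ℝ (⊤ : ℕ∞) φ) (hφc : HasCompactSupport φ)
    (hφs : tsupport φ ⊆ {x : V2 | x ∈ Rect ∧ x 1 ∉ T}) :
    |∫ x in Rect, u x i * pd 1 φ x| ≤ M * ∫ x, |φ x| := by
  have e := H.ibp φ hφ hφc (fun x hx => (hφs hx).1) i 1
  have z : ∫ x, φ x * gs x i 1 ∂σ = 0 := by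
    have : (fun x => φ x * gs x i 1) =ᵐ[σ] fun _ => 0 := by
      have h1 : ∀ᵐ x ∂σ, ¬ (x 1 ∉ T) := by
        rw [ae_iff]; simpa using hσ
      filter_upwards [h1] with x hx
      rw [image_eq_zero_of_notMem_tsupport (fun h => hx (hφs h).2), zero_mul]
    rw [integral_congr_ae this]; simp
  rw [e, z, sub_zero, abs_neg]
  have hi : Integrable φ := hφ.continuous.integrable_of_hasCompactSupport hφc
  calc |∫ x in Rect, φ x * gu x i 1| ≤ ∫ x in Rect, M * |φ x| := by
        rw [← Real.norm_eq_abs]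
        apply norm_integral_le_of_norm_le
        · exact (hi.norm.const_mul M).integrableOn
        · filter_upwards [hM] with x hx
          rw [norm_mul, Real.norm_eq_abs, Real.norm_eq_abs, mul_comm]
          exact mul_le_mul_of_nonneg_right ((abs_le_mnorm _ _ _).trans hx) (abs_nonneg _)
    _ = M * ∫ x in Rect, |φ x| := integral_const_mul _ _
    _ ≤ M * ∫ x, |φ x| := by
        apply mul_le_mul_of_nonneg_left _ hM0
        exact setIntegral_le_integral hi.norm (Eventually.of_forall fun x => abs_nonneg _)

lemma pd_reflect {ρ : V2 → ℝ} (hρ : ContDiff ℝ (⊤ : ℕ∞) ρ) (x y : V2) :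
    pd 1 (fun y => ρ (x - y)) y = - fderiv ℝ ρ (x - y) (Pi.single 1 1) := by
  unfold pd
  have h1 : HasFDerivAt (fun y : V2 => x - y) (-ContinuousLinearMap.id ℝ V2) y :=
    (hasFDerivAt_id y).const_sub x
  have h2 : HasFDerivAt ρ (fderiv ℝ ρ (x - y)) (x - y) :=
    ((hρ.differentiable (by simp)) _).hasFDerivAt
  have h3 : HasFDerivAt (fun y => ρ (x - y)) _ y := h2.comp y h1
  rw [h3.fderiv]
  simp

lemma vert_lip {u : V2 → V2} {gu : V2 → Mat2} {σ : Measure V2} {gs : V2 → Mat2}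
    (H : HasBVDerivOn Rect u gu σ gs) {M : ℝ}
    (hM : ∀ᵐ x ∂(volume.restrict Rect), mnorm (gu x) ≤ M) {T : Set ℝ} (hT : T.Finite)
    (hσ : σ {x : V2 | x 1 ∉ T} = 0) (hM0 : 0 ≤ M) (i : Fin 2) {v : V2 → ℝ}
    (huv : ∀ᵐ x ∂(volume.restrict Rect), u x i = v x)
    (hv : ∀ x ∈ Rect, x 1 ∉ T → ContinuousAt v x)
    {x0 : ℝ} (hx0 : x0 ∈ Ioo (0:ℝ) 1) {s t : ℝ} (hs : s ∈ Ioo (-1:ℝ) 1) (ht : t ∈ Ioo (-1:ℝ) 1)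
    (hst : s ≤ t) (hTst : ∀ r ∈ T, r ∉ Icc s t) :
    |v ![x0, t] - v ![x0, s]| ≤ M * (t - s) := by
  set U : Set V2 := {x : V2 | x ∈ Rect ∧ x 1 ∉ T} with hU
  have hUo : IsOpen U := isOpen_Rect.inter ((hT.isClosed.isOpen_compl).preimage
    (by fun_prop : Continuous fun x : V2 => x 1))
  set γ : ℝ → V2 := fun τ => ![x0, τ] with hγ
  have hγd : ∀ τ, HasDerivAt γ (Pi.single 1 1) τ := by
    intro τ
    rw [hasDerivAt_pi]
    intro k
    fin_cases k
    · simpa [hγ] using hasDerivAt_const τ x0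
    · simpa [hγ] using hasDerivAt_id' τ
  have hγc : Continuous γ := continuous_iff_continuousAt.2 fun τ => (hγd τ).continuousAt
  have hKU : γ '' Icc s t ⊆ U := by
    rintro _ ⟨τ, hτ, rfl⟩
    refine ⟨⟨by simpa [hγ] using hx0, ?_⟩, ?_⟩
    · simp only [hγ, Matrix.cons_val_one, Matrix.cons_val_fin_one]
      exact ⟨hs.1.trans_le hτ.1, hτ.2.trans_lt ht.2⟩
    · simp only [hγ, Matrix.cons_val_one, Matrix.cons_val_fin_one]
      exact fun h => hTst _ h hτ
  obtain ⟨δ, hδ, hδU⟩ := (isCompact_Icc.image hγc).exists_cthickening_subset_open hUo hKU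
  set g : V2 → ℝ := Rect.indicator v with hg
  have hgi : Integrable g := by
    rw [hg, integrable_indicator_iff measurableSet_Rect]
    have : IntegrableOn (fun x => u x i) Rect := by
      have := H.int_u
      exact this.eval i
    exact this.congr huv
  have hgc : ∀ x ∈ U, ContinuousAt g x := by
    intro x hx
    refine (hv x hx.1 hx.2).congr ?_
    filter_upwards [isOpen_Rect.mem_nhds hx.1] with y hy
    simp [hg, hy]
  have hgv : ∀ τ ∈ Icc s t, g (γ τ) = v (γ τ) := fun τ hτ => by
    simp [hg, (hKU ⟨τ, hτ, rfl⟩).1]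
  have hsI : s ∈ Icc s t := ⟨le_rfl, hst⟩
  have htI : t ∈ Icc s t := ⟨hst, le_rfl⟩
  change |v (γ t) - v (γ s)| ≤ _
  rw [← hgv t htI, ← hgv s hsI]
  apply le_of_forall_pos_le_add
  intro η hη
  obtain ⟨d1, hd1, c1⟩ := Metric.continuousAt_iff.1 (hgc _ (hKU ⟨t, htI, rfl⟩)) (η/2) (by linarith)
  obtain ⟨d2, hd2, c2⟩ := Metric.continuousAt_iff.1 (hgc _ (hKU ⟨s, hsI, rfl⟩)) (η/2) (by linarith)
  set d := min δ (min d1 d2) with hd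
  have hdpos : 0 < d := lt_min hδ (lt_min hd1 hd2)
  let B : ContDiffBump (0 : V2) := ⟨d/2, d, by linarith, by linarith⟩
  set ρ : V2 → ℝ := B.normed volume with hρdef
  have hρ : ContDiff ℝ (⊤ : ℕ∞) ρ := B.contDiff_normed
  have hρc : HasCompactSupport ρ := B.hasCompactSupport_normed
  set F : V2 → ℝ := convolution ρ g (ContinuousLinearMap.lsmul ℝ ℝ) volume with hF
  have E1 : dist (F (γ t)) (g (γ t)) ≤ η/2 :=
    ContDiffBump.dist_normed_convolution_le (φ := B) hgi.aestronglyMeasurable fun x hx =>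
      (c1 ((Metric.mem_ball.1 hx).trans_le ((min_le_right _ _).trans (min_le_left _ _)))).le
  have E2 : dist (F (γ s)) (g (γ s)) ≤ η/2 :=
    ContDiffBump.dist_normed_convolution_le (φ := B) hgi.aestronglyMeasurable fun x hx =>
      (c2 ((Metric.mem_ball.1 hx).trans_le ((min_le_right _ _).trans (min_le_right _ _)))).le
  have hder : ∀ τ ∈ Icc s t, ∃ D : ℝ, HasDerivAt (fun τ => F (γ τ)) D τ ∧ |D| ≤ M := by
    intro τ hτ
    set x := γ τ with hx
    have h1 := hρc.hasFDerivAt_convolution_left (ContinuousLinearMap.lsmul ℝ ℝ)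
      (hρ.of_le (by simp)) hgi.locallyIntegrable x
    have h2 := h1.comp_hasDerivAt τ (hγd τ)
    refine ⟨_, h2, ?_⟩
    set φ : V2 → ℝ := fun y => ρ (x - y) with hφ
    have hφd : ContDiff ℝ (⊤ : ℕ∞) φ := hρ.comp (contDiff_const.sub contDiff_id)
    have hsub : Function.support φ ⊆ Metric.closedBall x d := by
      intro y hy
      have : x - y ∈ Function.support ρ := hy
      rw [hρdef, B.support_normed_eq] at this
      have h3 : dist y x < d := by
        have := Metric.mem_ball.1 this
        rwa [dist_zero_right, ← dist_eq_norm, dist_comm] at this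
      exact Metric.mem_closedBall.2 h3.le
    have htsub : tsupport φ ⊆ Metric.closedBall x d :=
      closure_minimal hsub Metric.isClosed_closedBall
    have hφc : HasCompactSupport φ :=
      HasCompactSupport.intro (isCompact_closedBall x d) fun y hy => by
        by_contra h
        exact hy (hsub h)
    have hφU : tsupport φ ⊆ U := by
      intro y hy
      apply hδU
      apply Metric.mem_cthickening_of_dist_le y x δ (γ '' Icc s t) ⟨τ, hτ, rfl⟩
      exact (Metric.mem_closedBall.1 (htsub hy)).trans (min_le_left _ _)
    have key := test_bound H hM hσ hM0 i hφd hφc hφU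
    have hone : ∫ y, |φ y| = 1 := by
      have : ∀ y, |φ y| = ρ (x - y) := fun y => abs_of_nonneg (B.nonneg_normed _)
      simp only [this]
      rw [integral_sub_left_eq_self ρ volume x]
      exact B.integral_normed
    rw [hone, mul_one] at key
    have e : (convolution (fderiv ℝ ρ) g
        (ContinuousLinearMap.precompL V2 (ContinuousLinearMap.lsmul ℝ ℝ)) volume x) (Pi.single 1 1)
        = - ∫ y in Rect, u y i * pd 1 φ y := by
      have hex := (hρc.fderiv ℝ).convolutionExists_left
        (ContinuousLinearMap.precompL V2 (ContinuousLinearMap.lsmul ℝ ℝ))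
        (hρ.continuous_fderiv (by simp)) hgi.locallyIntegrable x
      rw [convolution_def, ContinuousLinearMap.integral_apply hex,
        ← integral_sub_left_eq_self _ volume x, ← integral_indicator measurableSet_Rect,
        ← integral_neg]
      apply integral_congr_ae
      have huv' := huv
      rw [ae_restrict_iff' measurableSet_Rect] at huv'
      filter_upwards [huv'] with y hy
      by_cases hyR : y ∈ Rect
      · simp only [indicator_of_mem hyR, hφ, sub_sub_cancel]
        rw [pd_reflect hρ, hy hyR, hg, indicator_of_mem hyR]
        simp [ContinuousLinearMap.precompL, mul_comm]
      · simp only [indicator_of_notMem hyR, sub_sub_cancel]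
        rw [hg, indicator_of_notMem hyR]
        simp
    rw [e, abs_neg]
    exact key
  choose! D hD1 hD2 using hder
  have mv := Convex.norm_image_sub_le_of_norm_hasDerivWithin_le
    (f := fun τ => F (γ τ)) (f' := D) (C := M) (s := Icc s t) (x := s) (y := t)
    (fun τ hτ => (hD1 τ hτ).hasDerivWithinAt) (fun τ hτ => hD2 τ hτ) (convex_Icc s t) hsI htI
  rw [Real.norm_eq_abs, Real.norm_eq_abs, abs_of_nonneg (sub_nonneg.2 hst)] at mv
  rw [Real.dist_eq] at E1 E2
  rw [abs_le] at *
  constructor <;> linarith [E1.1, E1.2, E2.1, E2.2, mv.1, mv.2]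

lemma PLr_of_SBV {u : V2 → V2} {gu : V2 → Mat2} {σ : Measure V2} {gs : V2 → Mat2}
    (H : HasBVDerivOn Rect u gu σ gs) (hJ : σ {x | ¬ JumpPt u x} = 0) {M : ℝ}
    (hM : ∀ᵐ x ∂(volume.restrict Rect), mnorm (gu x) ≤ M) {a b : ℝ → V2}
    (hM0 : 0 ≤ M)
    (huv : ∀ᵐ x ∂(volume.restrict Rect), u x = x 0 • a (x 1) + b (x 1)) (T : Finset ℝ)
    (hT : ∀ t ∈ Ioo (-1:ℝ) 1, t ∉ T → ContinuousAt (fun s => (a s, b s)) t)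
    (i : Fin 2) : PLr T (4 * M) (fun t => a t i) ∧ PLr T (4 * M) (fun t => b t i) := by
  have hσ : σ {x : V2 | x 1 ∉ (T : Set ℝ)} = 0 := by
    refine measure_mono_null (t := Rectᶜ ∪ {x | ¬ JumpPt u x}) ?_ (measure_union_null H.conc hJ)
    intro x hx
    by_cases hxR : x ∈ Rect
    · right
      intro hj
      exact jumpPt_height huv hxR hj (hT _ hxR.2 (by simpa using hx))
    · left; exact hxR
  have key := fun (x0 : ℝ) (hx0 : x0 ∈ Ioo (0:ℝ) 1) (s t : ℝ) (hs : s ∈ Ioo (-1:ℝ) 1)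
      (ht : t ∈ Ioo (-1:ℝ) 1) (hst : s ≤ t) (hr : ∀ r ∈ T, r ∉ Icc s t) =>
    vert_lip H hM T.finite_toSet hσ hM0 i (v := fun x : V2 => x 0 * a (x 1) i + b (x 1) i)
      (by filter_upwards [huv] with x hx; rw [hx]; simp)
      (by
        intro x hx hxT
        have c := hT _ hx.2 (by simpa using hxT)
        have c1 : ContinuousAt (fun y : V2 => y 1) x := (continuous_apply 1).continuousAt
        have c2 : ContinuousAt (fun y : V2 => (a (y 1), b (y 1))) x :=
          ContinuousAt.comp (g := fun s => (a s, b s)) (f := fun y : V2 => y 1) c c1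
        have ca : ContinuousAt (fun y : V2 => a (y 1) i) x :=
          ContinuousAt.comp (g := fun p : V2 × V2 => p.1 i)
            (f := fun y : V2 => (a (y 1), b (y 1))) (by fun_prop) c2
        have cb : ContinuousAt (fun y : V2 => b (y 1) i) x :=
          ContinuousAt.comp (g := fun p : V2 × V2 => p.2 i)
            (f := fun y : V2 => (a (y 1), b (y 1))) (by fun_prop) c2
        have c0 : ContinuousAt (fun y : V2 => y 0) x := (continuous_apply 0).continuousAt
        exact (c0.mul ca).add cb)
      hx0 hs ht hst (by simpa using hr)
  simp only [Matrix.cons_val_zero, Matrix.cons_val_one, Matrix.cons_val_fin_one] at key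
  have main : ∀ s₁ ∈ Ioo (-1:ℝ) 1, ∀ s₂ ∈ Ioo (-1:ℝ) 1, s₁ ≤ s₂ → (∀ r ∈ T, r ∉ Icc s₁ s₂) →
      |a s₂ i - a s₁ i| ≤ 4 * M * (s₂ - s₁) ∧ |b s₂ i - b s₁ i| ≤ 4 * M * (s₂ - s₁) := by
    intro s hs t ht hst hr
    have k1 := abs_le.1 (key (1/4) (by norm_num) s t hs ht hst hr)
    have k2 := abs_le.1 (key (3/4) (by norm_num) s t hs ht hst hr)
    have : 0 ≤ M * (t - s) := mul_nonneg hM0 (sub_nonneg.2 hst)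
    constructor <;> rw [abs_le] <;> constructor <;> nlinarith [k1.1, k1.2, k2.1, k2.2]
  exact ⟨fun s hs t ht hst hr => (main s hs t ht hst hr).1,
    fun s hs t ht hst hr => (main s hs t ht hst hr).2⟩

lemma PLr.const {S : Finset ℝ} {L : ℝ} {f : ℝ → ℝ} (hf : PLr S L f) (hL : 0 ≤ L)
    (h0 : ∀ᵐ t : ℝ, t ∈ Ioo (-1:ℝ) 1 → HasDerivAt f 0 t) {s₁ s₂ : ℝ} (h1 : s₁ ∈ Ioo (-1:ℝ) 1)
    (h2 : s₂ ∈ Ioo (-1:ℝ) 1) (h12 : s₁ ≤ s₂) (hS : ∀ r ∈ S, r ∉ Icc s₁ s₂) : f s₁ = f s₂ := by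
  have hsub : Icc s₁ s₂ ⊆ Ioo (-1) 1 := fun x hx => ⟨h1.1.trans_le hx.1, hx.2.trans_lt h2.2⟩
  have hl := hf.lip hL hsub hS
  rw [← uIcc_of_le h12] at hl hsub
  obtain ⟨C, hC⟩ := hl.absolutelyContinuousOnInterval.const_of_ae_hasDerivAt_zero
    (by filter_upwards [h0] with x hx hxI using hx (hsub hxI))
  rw [hC _ left_mem_uIcc, hC _ right_mem_uIcc]

lemma forward_core {u : V2 → V2} {gu : V2 → Mat2} {σ : Measure V2} {gs : V2 → Mat2}
    (H : HasBVDerivOn Rect u gu σ gs) (hdet : ∀ᵐ x ∂(volume.restrict Rect), (gu x).det = 1)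
    {a b : ℝ → V2} (hunit : ∀ t ∈ Ioo (-1:ℝ) 1, a t 0 ^ 2 + a t 1 ^ 2 = 1)
    (huv : ∀ᵐ x ∂(volume.restrict Rect), u x = x 0 • a (x 1) + b (x 1)) (T : Finset ℝ)
    {L : ℝ} (hL : 0 ≤ L)
    (hP : ∀ i, PLr T L (fun t => a t i) ∧ PLr T L (fun t => b t i)) :
    ∃ R : ℝ → Mat2, ∃ ψ : ℝ → V2,
            (∀ t ∈ Ioo (-1:ℝ) 1, R t ∈ SO2) ∧ PCOn (-1) 1 R ∧ PLipOn (-1) 1 ψ ∧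
            (∀ᵐ x ∂(volume.restrict Rect), u x = (R (x 1)).mulVec x + ψ (x 1)) ∧
            (∀ᵐ t ∂(volume.restrict (Ioo (-1:ℝ) 1)),
              dot (vecDeriv ψ t) ((R t).mulVec e2) = 0) := by
  have G := fun i => gu_global H i hL (hP i).1 (hP i).2
    (by filter_upwards [huv] with x hx; rw [hx]; simp)
  have D := affine_ae (c := fun t => a t 0 * deriv (fun t => a t 1) t - a t 1 * deriv (fun t => a t 0) t)
    (d := fun t => a t 0 * deriv (fun t => b t 1) t - a t 1 * deriv (fun t => b t 0) t) (by
      filter_upwards [G 0, G 1, hdet, ae_restrict_mem measurableSet_Rect] with x g0 g1 hd hx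
      rw [Matrix.det_fin_two, (g0 hx.2).1, (g0 hx.2).2, (g1 hx.2).1, (g1 hx.2).2] at hd
      linarith)
  have D0 : ∀ᵐ t : ℝ, t ∈ Ioo (-1:ℝ) 1 → ∀ i, HasDerivAt (fun t => a t i) 0 t := by
    filter_upwards [D, (hP 0).1.ae_diff hL, (hP 1).1.ae_diff hL] with t hD h0 h1 ht
    have d0 := (h0 ht).hasDerivAt
    have d1 := (h1 ht).hasDerivAt
    have dd := (d0.pow 2).add (d1.pow 2)
    have ev : (fun t => (a t 0) ^ 2 + (a t 1) ^ 2) =ᶠ[𝓝 t] fun _ => 1 := by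
      filter_upwards [isOpen_Ioo.mem_nhds ht] with s hs using hunit s hs
    have dz := dd.unique ((hasDerivAt_const t (1:ℝ)).congr_of_eventuallyEq ev)
    have c0 := (hD ht).1
    have hu := hunit t ht
    set p := deriv (fun t => a t 0) t
    set q := deriv (fun t => a t 1) t
    simp only [Nat.cast_ofNat, Nat.add_one_sub_one, pow_one] at dz
    have hp : p = 0 := by
      have : (a t 0 ^ 2 + a t 1 ^ 2) * p = 0 := by linear_combination a t 0 / 2 * dz - a t 1 * c0
      rwa [hu, one_mul] at this
    have hq : q = 0 := by
      have : (a t 0 ^ 2 + a t 1 ^ 2) * q = 0 := by linear_combination a t 1 / 2 * dz + a t 0 * c0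
      rwa [hu, one_mul] at this
    rw [hp] at d0
    rw [hq] at d1
    intro i
    fin_cases i
    · exact d0
    · exact d1
  have C : ∀ i, ∀ s₁ ∈ Ioo (-1:ℝ) 1, ∀ s₂ ∈ Ioo (-1:ℝ) 1, s₁ ≤ s₂ → (∀ r ∈ T, r ∉ Icc s₁ s₂) →
      a s₁ i = a s₂ i := fun i s₁ h1 s₂ h2 h12 hr =>
    (hP i).1.const hL (by filter_upwards [D0] with t h ht using h ht i) h1 h2 h12 hr
  have ab : ∀ t ∈ Ioo (-1:ℝ) 1, |a t 0| ≤ 1 ∧ |a t 1| ≤ 1 := by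
    intro t ht
    have := hunit t ht
    constructor <;> rw [abs_le] <;> constructor <;> nlinarith [sq_nonneg (a t 0), sq_nonneg (a t 1)]
  refine ⟨fun t => !![a t 0, -a t 1; a t 1, a t 0], fun t => b t - t • ![-a t 1, a t 0],
    ?_, ⟨T, ?_⟩, ⟨T, 2 * L + 2, by linarith, ?_⟩, ?_, ?_⟩
  · intro t ht
    have := hunit t ht
    constructor
    · ext i j
      fin_cases i <;> fin_cases j <;> simp [Matrix.mul_apply, Fin.sum_univ_two] <;> nlinarith
    · rw [Matrix.det_fin_two]; simp; nlinarith
  · intro s hs t ht hst hr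
    simp only [C 0 s hs t ht hst hr, C 1 s hs t ht hst hr]
  · intro s hs t ht hst hr
    refine (vnorm_le_abs _).trans ?_
    have b0 := abs_le.1 ((hP 0).2 s hs t ht hst hr)
    have b1 := abs_le.1 ((hP 1).2 s hs t ht hst hr)
    have n0 := abs_le.1 (ab t ht).1
    have n1 := abs_le.1 (ab t ht).2
    have hts := sub_nonneg.2 hst
    simp only [C 0 s hs t ht hst hr, C 1 s hs t ht hst hr, Pi.sub_apply, Pi.smul_apply,
      Matrix.cons_val_zero, Matrix.cons_val_one, Matrix.cons_val_fin_one, smul_eq_mul]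
    have e0 : |b t 0 - t * -a t 1 - (b s 0 - s * -a t 1)| ≤ (L + 1) * (t - s) := by
      rw [abs_le]; constructor <;> nlinarith [b0.1, b0.2, n1.1, n1.2]
    have e1 : |b t 1 - t * a t 0 - (b s 1 - s * a t 0)| ≤ (L + 1) * (t - s) := by
      rw [abs_le]; constructor <;> nlinarith [b1.1, b1.2, n0.1, n0.2]
    linarith
  · filter_upwards [huv] with x hx
    rw [hx]
    ext i
    fin_cases i <;> simp [dotProduct, Fin.sum_univ_two, Matrix.vecHead, Matrix.vecTail] <;> ring
  · rw [ae_restrict_iff' measurableSet_Ioo]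
    filter_upwards [D, D0, (hP 0).2.ae_diff hL, (hP 1).2.ae_diff hL] with t hD hD0 h0 h1 ht
    have a0 := hD0 ht 0
    have a1 := hD0 ht 1
    have c0 : HasDerivAt (fun s => (b s - s • ![-a s 1, a s 0]) 0)
        (deriv (fun t => b t 0) t + a t 1) t := by
      have : HasDerivAt (fun s => b s 0 - s * -a s 1) _ t :=
        (h0 ht).hasDerivAt.sub ((hasDerivAt_id' t).mul a1.neg)
      simpa using this
    have c1 : HasDerivAt (fun s => (b s - s • ![-a s 1, a s 0]) 1)
        (deriv (fun t => b t 1) t - a t 0) t := by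
      have : HasDerivAt (fun s => b s 1 - s * a s 0) _ t :=
        (h1 ht).hasDerivAt.sub ((hasDerivAt_id' t).mul a0)
      simpa using this
    have hd := (hD ht).2
    have hu := hunit t ht
    simp only [dot, vecDeriv, Fin.sum_univ_two]
    rw [c0.deriv, c1.deriv]
    simp [Matrix.mulVec, dotProduct, Fin.sum_univ_two, e2]
    linarith

lemma pl_bounded {E : Type*} [PseudoMetricSpace E] {f : ℝ → E} {L : ℝ} (hL : 0 ≤ L) (S : Finset ℝ) :
    ∀ p q : ℝ, (∀ s₁ ∈ Ioo p q, ∀ s₂ ∈ Ioo p q, s₁ ≤ s₂ → (∀ r ∈ S, r ∉ Icc s₁ s₂) →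
      dist (f s₁) (f s₂) ≤ L * (s₂ - s₁)) → Bornology.IsBounded (f '' Ioo p q) := by
  induction S using Finset.induction_on with
  | empty =>
    intro p q h
    rw [Metric.isBounded_iff]
    refine ⟨L * (q - p), ?_⟩
    rintro _ ⟨x, hx, rfl⟩ _ ⟨y, hy, rfl⟩
    rcases le_total x y with hxy | hxy
    · exact (h x hx y hy hxy (by simp)).trans
        (mul_le_mul_of_nonneg_left (by linarith [hx.1, hy.2]) hL)
    · rw [dist_comm]
      exact (h y hy x hx hxy (by simp)).trans
        (mul_le_mul_of_nonneg_left (by linarith [hy.1, hx.2]) hL)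
  | insert r S _ ih =>
    intro p q h
    have h1 := ih p (min q r) (by
      intro s hs t ht hst hr
      refine h s ⟨hs.1, hs.2.trans_le (min_le_left _ _)⟩ t ⟨ht.1, ht.2.trans_le (min_le_left _ _)⟩ hst ?_
      intro z hz
      rcases Finset.mem_insert.1 hz with rfl | hz
      · intro hzz
        exact absurd (hzz.2.trans_lt (ht.2.trans_le (min_le_right _ _))) (lt_irrefl _)
      · exact hr z hz)
    have h2 := ih (max p r) q (by
      intro s hs t ht hst hr
      refine h s ⟨(le_max_left _ _).trans_lt hs.1, hs.2⟩ t ⟨(le_max_left _ _).trans_lt ht.1, ht.2⟩ hst ?_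
      intro z hz
      rcases Finset.mem_insert.1 hz with rfl | hz
      · intro hzz
        exact absurd (((le_max_right _ _).trans_lt hs.1).trans_le hzz.1) (lt_irrefl _)
      · exact hr z hz)
    refine ((h1.union h2).union (Bornology.isBounded_singleton (x := f r))).subset ?_
    rintro _ ⟨x, hx, rfl⟩
    rcases lt_trichotomy x r with hxr | hxr | hxr
    · exact Or.inl (Or.inl ⟨x, ⟨hx.1, lt_min hx.2 hxr⟩, rfl⟩)
    · right; simp [hxr]
    · exact Or.inl (Or.inr ⟨x, ⟨max_lt hx.1 hxr, hx.2⟩, rfl⟩)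

lemma pl_bv {E : Type*} [PseudoMetricSpace E] {f : ℝ → E} {L : ℝ} (hL : 0 ≤ L) (S : Finset ℝ)
    (h : ∀ s₁ ∈ Ioo (-1:ℝ) 1, ∀ s₂ ∈ Ioo (-1:ℝ) 1, s₁ ≤ s₂ → (∀ r ∈ S, r ∉ Icc s₁ s₂) →
      dist (f s₁) (f s₂) ≤ L * (s₂ - s₁)) : BoundedVariationOn f (Ioo (-1) 1) := by
  classical
  obtain ⟨D', hD'⟩ := Metric.isBounded_iff.1 (pl_bounded hL S (-1) 1 h)
  set D := max D' 0 with hDdef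
  have hD0 : 0 ≤ D := le_max_right _ _
  have hD : ∀ x ∈ Ioo (-1:ℝ) 1, ∀ y ∈ Ioo (-1:ℝ) 1, dist (f x) (f y) ≤ D := fun x hx y hy =>
    (hD' ⟨x, hx, rfl⟩ ⟨y, hy, rfl⟩).trans (le_max_left _ _)
  let A : ℝ → ℝ := fun t => ((S.filter fun r => r < t).card : ℝ)
  let B : ℝ → ℝ := fun t => ((S.filter fun r => r ≤ t).card : ℝ)
  let G : ℝ → ℝ := fun t => L * t + D * (A t + B t)
  have hA : Monotone A := fun x y hxy => by
    have : (S.filter fun r => r < x) ⊆ S.filter fun r => r < y :=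
      Finset.monotone_filter_right S fun r _ hr => lt_of_lt_of_le hr hxy
    exact Nat.cast_le.2 (Finset.card_le_card this)
  have hB : Monotone B := fun x y hxy => by
    have : (S.filter fun r => r ≤ x) ⊆ S.filter fun r => r ≤ y :=
      Finset.monotone_filter_right S fun r _ hr => le_trans hr hxy
    exact Nat.cast_le.2 (Finset.card_le_card this)
  have hG : Monotone G := fun x y hxy =>
    add_le_add (mul_le_mul_of_nonneg_left hxy hL)
      (mul_le_mul_of_nonneg_left (add_le_add (hA hxy) (hB hxy)) hD0)
  have key : ∀ x ∈ Ioo (-1:ℝ) 1, ∀ y ∈ Ioo (-1:ℝ) 1, x ≤ y → dist (f x) (f y) ≤ G y - G x := by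
    intro x hx y hy hxy
    have a1 := hA hxy
    have b1 := hB hxy
    have hLL : 0 ≤ L * (y - x) := mul_nonneg hL (sub_nonneg.2 hxy)
    have eG : G y - G x = L * (y - x) + D * ((A y - A x) + (B y - B x)) := by
      simp only [G]; ring
    rw [eG]
    by_cases hr : ∀ r ∈ S, r ∉ Icc x y
    · have := h x hx y hy hxy hr
      have : 0 ≤ D * ((A y - A x) + (B y - B x)) := mul_nonneg hD0 (by linarith)
      linarith
    · push Not at hr
      obtain ⟨r, hrS, hrI⟩ := hr
      rcases hxy.eq_or_lt with rfl | hlt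
      · simp
      have h1 : 1 ≤ (A y - A x) + (B y - B x) := by
        rcases hrI.1.eq_or_lt with hxr | hxr
        · have : (S.filter fun r => r < x).card < (S.filter fun r => r < y).card := by
            apply Finset.card_lt_card
            refine (Finset.ssubset_iff_of_subset
              (Finset.monotone_filter_right S fun r _ hr => lt_of_lt_of_le hr hxy)).2
              ⟨r, ?_, ?_⟩
            · simp only [Finset.mem_filter]; exact ⟨hrS, by linarith⟩
            · simp only [Finset.mem_filter, not_and, not_lt]; intro _; exact hrI.1
          have : A x + 1 ≤ A y := by simp only [A]; exact_mod_cast this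
          linarith
        · have : (S.filter fun r => r ≤ x).card < (S.filter fun r => r ≤ y).card := by
            apply Finset.card_lt_card
            refine (Finset.ssubset_iff_of_subset
              (Finset.monotone_filter_right S fun r _ hr => le_trans hr hxy)).2
              ⟨r, ?_, ?_⟩
            · simp only [Finset.mem_filter]; exact ⟨hrS, hrI.2⟩
            · simp only [Finset.mem_filter, not_and, not_le]; intro _; exact hxr
          have : B x + 1 ≤ B y := by simp only [B]; exact_mod_cast this
          linarith
      have := hD x hx y hy
      nlinarith
  have e1 : eVariationOn f (Ioo (-1) 1) ≤ eVariationOn G (Ioo (-1) 1) := by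
    unfold eVariationOn
    apply iSup_mono
    rintro ⟨n, w, hw, hws⟩
    apply Finset.sum_le_sum
    intro i _
    have := key (w i) (hws i) (w (i+1)) (hws (i+1)) (hw (Nat.le_succ i))
    rw [edist_dist, edist_dist]
    apply ENNReal.ofReal_le_ofReal
    rw [dist_comm, Real.dist_eq]
    exact this.trans (le_abs_self _)
  have e2 : eVariationOn G (Ioo (-1) 1) ≤ ENNReal.ofReal (G 1 - G (-1)) := by
    refine (eVariationOn.mono G (s := univ ∩ Icc (-1) 1) ?_).trans
      ((hG.monotoneOn univ).eVariationOn_eq (mem_univ (-1)) (mem_univ 1)).le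
    intro x hx
    exact ⟨mem_univ _, Ioo_subset_Icc_self hx⟩
  exact ((e1.trans e2).trans_lt ENNReal.ofReal_lt_top).ne

lemma backward_core {u : V2 → V2} {gu : V2 → Mat2} {σ : Measure V2} {gs : V2 → Mat2}
    (H : HasBVDerivOn Rect u gu σ gs) {R : ℝ → Mat2} {ψ : ℝ → V2}
    (hR : ∀ t ∈ Ioo (-1:ℝ) 1, R t ∈ SO2) (hPC : PCOn (-1) 1 R) (hPL : PLipOn (-1) 1 ψ)
    (hu : ∀ᵐ x ∂(volume.restrict Rect), u x = (R (x 1)).mulVec x + ψ (x 1))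
    (hd : ∀ᵐ t ∂(volume.restrict (Ioo (-1:ℝ) 1)),
              dot (vecDeriv ψ t) ((R t).mulVec e2) = 0) : memAOn Rect (-1) 1 u := by
  classical
  obtain ⟨S1, hS1⟩ := hPC
  obtain ⟨S2, L, hL, hS2⟩ := hPL
  refine ⟨gu, σ, gs, H, ⟨R, ψ, hR, ?_, ?_, hu⟩, ?_⟩
  · refine pl_bv le_rfl S1 ?_
    intro s hs t ht hst hr
    rw [hS1 s hs t ht hst hr]
    simp
  · refine pl_bv hL S2 ?_
    intro s hs t ht hst hr
    have := hS2 s hs t ht hst hr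
    rw [dist_comm, dist_eq_norm]
    rw [vnorm_eq] at this
    exact this
  · set S := S1 ∪ S2 with hS
    have n1 : ∀ {s t : ℝ}, (∀ r ∈ S, r ∉ Icc s t) → ∀ r ∈ S1, r ∉ Icc s t := fun h r hr =>
      h r (Finset.mem_union_left _ hr)
    have n2 : ∀ {s t : ℝ}, (∀ r ∈ S, r ∉ Icc s t) → ∀ r ∈ S2, r ∉ Icc s t := fun h r hr =>
      h r (Finset.mem_union_right _ hr)
    have PR : ∀ i j, PLr S (L + 1) (fun t => R t i j) := by
      intro i j s hs t ht hst hr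
      simp only [hS1 s hs t ht hst (n1 hr), sub_self, abs_zero]
      exact mul_nonneg (by linarith) (sub_nonneg.2 hst)
    have Pψ : ∀ i, PLr S L (fun t => ψ t i) := by
      intro i s hs t ht hst hr
      have := abs_le_vnorm (ψ t - ψ s) i
      exact this.trans (hS2 s hs t ht hst (n2 hr))
    have PB : ∀ i, PLr S (L + 1) (fun t => t * R t i 1 + ψ t i) := by
      intro i s hs t ht hst hr
      have h1 := Pψ i s hs t ht hst hr
      have h2 : |R t i 1| ≤ 1 := by
        obtain ⟨k1, k2, k3⟩ := SO2_entries (hR t ht)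
        fin_cases i
        · change |R t 0 1| ≤ 1
          rw [k1, abs_neg, abs_le]; constructor <;> nlinarith [sq_nonneg (R t 0 0), sq_nonneg (R t 1 0)]
        · change |R t 1 1| ≤ 1
          rw [k2, abs_le]; constructor <;> nlinarith [sq_nonneg (R t 0 0), sq_nonneg (R t 1 0)]
      simp only [hS1 s hs t ht hst (n1 hr)]
      simp only at h1
      rw [abs_le] at *
      have := sub_nonneg.2 hst
      constructor <;> nlinarith [h1.1, h1.2, h2.1, h2.2]
    have G := fun i : Fin 2 => gu_global H i (by linarith) (PR i 0) (PB i)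
      (by
        filter_upwards [hu] with x hx
        rw [hx]
        simp only [Pi.add_apply, Matrix.mulVec, dotProduct, Fin.sum_univ_two]
        ring)
    have dR : ∀ i j, ∀ᵐ t : ℝ, t ∈ Ioo (-1:ℝ) 1 → HasDerivAt (fun t => R t i j) 0 t := by
      intro i j
      refine ae_of_strips (fun t => t) S ?_ _ ?_
      · have := S.finite_toSet.countable.ae_notMem (volume : Measure ℝ)
        simpa using this
      · intro p q hpq hS
        refine Eventually.of_forall fun t ht => ?_
        refine (hasDerivAt_const t (R t i j)).congr_of_eventuallyEq ?_
        filter_upwards [isOpen_Ioo.mem_nhds ht] with s hs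
        have hs' := Ioo_subset_Icc_self hs
        have ht' := Ioo_subset_Icc_self ht
        rcases le_total s t with hst | hst
        · rw [hS1 s (hpq hs') t (hpq ht') hst (n1 fun r hr hz =>
            hS r hr ⟨hs'.1.trans hz.1, hz.2.trans ht'.2⟩)]
        · rw [hS1 t (hpq ht') s (hpq hs') hst (n1 fun r hr hz =>
            hS r hr ⟨ht'.1.trans hz.1, hz.2.trans hs'.2⟩)]
    have Q : ∀ᵐ t : ℝ, t ∈ Ioo (-1:ℝ) 1 →
        (∀ i, deriv (fun t => R t i 0) t = 0) ∧
        (∀ i, deriv (fun t => t * R t i 1 + ψ t i) t = R t i 1 + deriv (fun t => ψ t i) t) ∧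
        dot (vecDeriv ψ t) ((R t).mulVec e2) = 0 := by
      rw [ae_restrict_iff' measurableSet_Ioo] at hd
      filter_upwards [hd, dR 0 0, dR 1 0, dR 0 1, dR 1 1, (Pψ 0).ae_diff hL, (Pψ 1).ae_diff hL]
        with t h0 h1 h2 h3 h4 h5 h6 ht
      refine ⟨?_, ?_, h0 ht⟩
      · intro i
        fin_cases i
        · exact (h1 ht).deriv
        · exact (h2 ht).deriv
      · have aux : ∀ i, HasDerivAt (fun t => R t i 1) 0 t → DifferentiableAt ℝ (fun t => ψ t i) t →
            deriv (fun t => t * R t i 1 + ψ t i) t = R t i 1 + deriv (fun t => ψ t i) t := by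
          intro i k1 k2
          have : HasDerivAt (fun t => t * R t i 1 + ψ t i) _ t :=
            ((hasDerivAt_id' t).mul k1).add k2.hasDerivAt
          rw [this.deriv]; simp
        intro i
        fin_cases i
        · exact aux 0 (h3 ht) (h5 ht)
        · exact aux 1 (h4 ht) (h6 ht)
    have Q' : ∀ᵐ x ∂(volume.restrict Rect), _ := ae_restrict_of_ae (quasi_eval1.ae Q)
    filter_upwards [G 0, G 1, Q', ae_restrict_mem measurableSet_Rect] with x g0 g1 q hx
    obtain ⟨q1, q2, q3⟩ := q hx.2
    rw [Matrix.det_fin_two, (g0 hx.2).1, (g0 hx.2).2, (g1 hx.2).1, (g1 hx.2).2, q1, q1, q2, q2]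
    obtain ⟨k1, k2, k3⟩ := SO2_entries (hR _ hx.2)
    simp only [dot, vecDeriv, Fin.sum_univ_two, Matrix.mulVec, dotProduct, e2,
      Matrix.cons_val_zero, Matrix.cons_val_one, Matrix.cons_val_fin_one] at q3
    rw [k1, k2] at *
    linear_combination q3 + k3

/-- Remark 4.1(c): characterization of `A ∩ SBV_∞(Ω;ℝ²)` on
`Ω = (0,1) × (−1,1)`: `A ∩ SBV_∞` consists of the `SBV_∞` maps `u(x) = R(x₂)x + ψ(x₂)` with
`R ∈ PC(−1,1;SO(2))`, `ψ ∈ SBV_∞(−1,1;ℝ²)` (piecewise Lipschitz with finitely many jumps)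
and `ψ'·Re₂ = 0` a.e.; in particular the jump set `J_u` of such `u` is contained in a finite
union of horizontal segments. -/
theorem charA_SBVinf_Rect :
    ∀ u : V2 → V2,
      ((memAOn Rect (-1) 1 u ∧ memSBVinf Rect u) ↔
        (memSBVinf Rect u ∧
          ∃ R : ℝ → Mat2, ∃ ψ : ℝ → V2,
            (∀ t ∈ Ioo (-1:ℝ) 1, R t ∈ SO2) ∧ PCOn (-1) 1 R ∧ PLipOn (-1) 1 ψ ∧
            (∀ᵐ x ∂(volume.restrict Rect), u x = (R (x 1)).mulVec x + ψ (x 1)) ∧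
            (∀ᵐ t ∂(volume.restrict (Ioo (-1:ℝ) 1)),
              dot (vecDeriv ψ t) ((R t).mulVec e2) = 0))) ∧
      ((memAOn Rect (-1) 1 u ∧ memSBVinf Rect u) →
        ∃ F : Finset ℝ, jumpSet Rect u ⊆ {x : V2 | x 1 ∈ F}) := by
  have fwd : ∀ u : V2 → V2, memAOn Rect (-1) 1 u → memSBVinf Rect u →
      (∃ R : ℝ → Mat2, ∃ ψ : ℝ → V2,
            (∀ t ∈ Ioo (-1:ℝ) 1, R t ∈ SO2) ∧ PCOn (-1) 1 R ∧ PLipOn (-1) 1 ψ ∧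
            (∀ᵐ x ∂(volume.restrict Rect), u x = (R (x 1)).mulVec x + ψ (x 1)) ∧
            (∀ᵐ t ∂(volume.restrict (Ioo (-1:ℝ) 1)),
              dot (vecDeriv ψ t) ((R t).mulVec e2) = 0)) ∧
        ∃ F : Finset ℝ, jumpSet Rect u ⊆ {x : V2 | x 1 ∈ F} := by
    rintro u ⟨gu, σ, gs, H, ⟨R, ψ, hR, hRb, hψb, hu⟩, hdet⟩ ⟨gu', σ', gs', H', hJ, ⟨M, hM⟩, hH⟩
    obtain ⟨a, b, hab, hunit, huv⟩ := exists_repr hR hRb hψb hu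
    have hfin := jumps_finite hab huv hH
    have hT : ∀ t ∈ Ioo (-1:ℝ) 1, t ∉ hfin.toFinset → ContinuousAt (fun s => (a s, b s)) t := by
      intro t ht hnt
      by_contra hc
      exact hnt (hfin.mem_toFinset.2 ⟨ht, hc⟩)
    have hM' : ∀ᵐ x ∂(volume.restrict Rect), mnorm (gu' x) ≤ max M 0 := by
      filter_upwards [hM] with x hx using hx.trans (le_max_left _ _)
    have hM0 : 0 ≤ max M 0 := le_max_right _ _
    refine ⟨forward_core H hdet hunit huv hfin.toFinset (L := 4 * max M 0) (by linarith)
      (fun i => PLr_of_SBV H' hJ hM' hM0 huv hfin.toFinset hT i), hfin.toFinset, ?_⟩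
    rintro x ⟨hxR, hj⟩
    exact hfin.mem_toFinset.2 ⟨hxR.2, jumpPt_height huv hxR hj⟩
  intro u
  refine ⟨⟨fun h => ⟨h.2, (fwd u h.1 h.2).1⟩, ?_⟩, fun h => (fwd u h.1 h.2).2⟩
  rintro ⟨hS, R, ψ, hR, hPC, hPL, hu, hd⟩
  refine ⟨?_, hS⟩
  obtain ⟨gu, σ, gs, H, -⟩ := hS
  exact backward_core H hR hPC hPL hu hd
end
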